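/- arXiv:1511.09280 — 2 statements merged into one kernel-verified Lean document; each statement's English description precedes it below -/
import Mathlib

section
/- Let X be a Cantor space and K a good nonempty set of Borel probability measures on X, each of which has full support. Let ν be a Borel probability measure on X such that h_*ν = ν for every homeomorphism h of X preserving every measure in K. If A is a clopen set and n ≥ 1 is an integer with μ(A) < 1/n for every μ ∈ K, then ν(A) ≤ 1/n. -/
/-!
If two clopen sets have the same measure under every element of `K`, a homeomorphism preserving
every measure in `K` maps one onto the other (`exists_homeo`). Given this, `Good K` and `μ A < 1 / n` allow one to pick, one
after another, `n` pairwise disjoint clopen sets `K`-equivalent to `A`; each of them has the same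
`ν`-measure as `A`, so `n * ν A ≤ 1` (`exists_multiple`).

The homeomorphism comes from a back-and-forth argument. A finite partial isomorphism is encoded as
a pair of locally constant labellings `a b : X → ℕ` whose fibres over each label are
`K`-equivalent: the clopen piece `a ⁻¹' {i}` is to be sent onto `b ⁻¹' {i}`. If `C` is clopen, any
piece of `a` is cut by `C` either trivially or, by full support, in a part of strictly smaller
measure for all `μ ∈ K`; goodness then gives a corresponding cut of the matching piece of `b`
(`Matched.forth`). Running through the countably many clopen sets on both sides gives refining
sequences `a n`, `b n` that separate points, and the relation `∀ n, a n x = b n y` is, by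
compactness, the graph of a homeomorphism. It preserves the measure of each clopen set, hence
preserves each `μ ∈ K`.
-/

open MeasureTheory

namespace DynSimplex

variable {X : Type*} [TopologicalSpace X] [MeasurableSpace X] [OpensMeasurableSpace X]

/-- `g` preserves the probability measure `μ`, i.e. `g_*μ = μ`. -/
def Preserves (g : X ≃ₜ X) (μ : ProbabilityMeasure X) : Prop :=
  (μ : Measure X).map g = (μ : Measure X)

/-- A homeomorphism is minimal if all of its (two-sided) orbits are dense. -/
def IsMinimal (g : X ≃ₜ X) : Prop :=
  ∀ x : X, Dense (Set.range fun n : ℤ => (g.toEquiv ^ n) x)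

/-- A set of probability measures is good if for all clopen `A`, `B` with `μ A < μ B` for
all `μ ∈ K`, there is a clopen `C ⊆ B` with `μ C = μ A` for all `μ ∈ K`. -/
def Good (K : Set (ProbabilityMeasure X)) : Prop :=
  ∀ A B : Set X, IsClopen A → IsClopen B → (∀ μ ∈ K, μ A < μ B) →
    ∃ C : Set X, IsClopen C ∧ C ⊆ B ∧ ∀ μ ∈ K, μ C = μ A

/-- Approximate divisibility of a set of probability measures. -/
def ApproximatelyDivisible (K : Set (ProbabilityMeasure X)) : Prop :=
  ∀ A : Set X, IsClopen A → ∀ n : ℕ, 1 ≤ n → ∀ ε : ℝ, 0 < ε →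
    ∃ B : Set X, IsClopen B ∧ B ⊆ A ∧
      ∀ μ ∈ K, (μ A : ℝ) - ε ≤ (n : ℝ) * (μ B : ℝ) ∧ (n : ℝ) * (μ B : ℝ) ≤ (μ A : ℝ)

/-- A probability measure has full support if every nonempty open set has positive measure. -/
def FullSupport (μ : ProbabilityMeasure X) : Prop :=
  ∀ U : Set X, IsOpen U → U.Nonempty → 0 < μ U

/-- A probability measure is atomless if all singletons are null. -/
def Atomless (μ : ProbabilityMeasure X) : Prop :=
  ∀ x : X, μ {x} = 0

/-- Convexity of a set of probability measures (as a subset of the `ℝ≥0`-module of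
finite measures). -/
def ProbConvex (K : Set (ProbabilityMeasure X)) : Prop :=
  Convex NNReal (ProbabilityMeasure.toFiniteMeasure '' K)

/-- The set of extreme points of a set of probability measures. -/
def ProbExtremePoints (K : Set (ProbabilityMeasure X)) : Set (ProbabilityMeasure X) :=
  ProbabilityMeasure.toFiniteMeasure ⁻¹'
    (Set.extremePoints NNReal (ProbabilityMeasure.toFiniteMeasure '' K))

/-- A dynamical simplex: a nonempty compact convex set of atomless, fully supported
probability measures which is good and approximately divisible. -/
def DynamicalSimplex (K : Set (ProbabilityMeasure X)) : Prop :=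
  K.Nonempty ∧ IsCompact K ∧ ProbConvex K ∧
    (∀ μ ∈ K, Atomless μ ∧ FullSupport μ) ∧ Good K ∧ ApproximatelyDivisible K

/-- Membership in the full group of `g`. -/
def InFullGroup (g h : X ≃ₜ X) : Prop :=
  ∀ x : X, ∃ n : ℤ, h x = (g.toEquiv ^ n) x

/-- Membership in the topological full group of `g`: `h` is given piecewise by powers of `g`
on a finite clopen partition of `X`. -/
def InTopologicalFullGroup (g h : X ≃ₜ X) : Prop :=
  ∃ (k : ℕ) (A : Fin k → Set X) (n : Fin k → ℤ),
    (∀ i, IsClopen (A i)) ∧ (∀ x : X, ∃! i, x ∈ A i) ∧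
    ∀ i, ∀ x ∈ A i, h x = (g.toEquiv ^ (n i)) x

/-- `g` preserves every measure in `K` (i.e. `g` belongs to the group `G`). -/
def PreservesAll (K : Set (ProbabilityMeasure X)) (g : X ≃ₜ X) : Prop :=
  ∀ μ ∈ K, Preserves g μ

/-- `g` is `K`-saturated: any two `K`-equivalent clopen sets are mapped one to the other by
an element of the topological full group of `g`. -/
def KSaturated (K : Set (ProbabilityMeasure X)) (g : X ≃ₜ X) : Prop :=
  ∀ U V : Set X, IsClopen U → IsClopen V → (∀ μ ∈ K, μ U = μ V) →
    ∃ h : X ≃ₜ X, InTopologicalFullGroup g h ∧ h '' U = V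

/-- The topology of uniform convergence on the homeomorphism group of a compact space
(the compact-open topology, induced from `C(X, X)`). -/
instance : TopologicalSpace (X ≃ₜ X) :=
  TopologicalSpace.induced (fun h : X ≃ₜ X => (h : C(X, X))) inferInstance

/-- A KR-partition for `K`: a finite family of columns, each column being a finite sequence of
clopen sets which are all `K`-equivalent, the atoms of all columns forming a partition of `X`. -/
structure KRPartition (X : Type*) [TopologicalSpace X] [MeasurableSpace X]
    (K : Set (ProbabilityMeasure X)) where
  numCols : ℕ
  height : Fin numCols → ℕ
  atom : (i : Fin numCols) → Fin (height i + 1) → Set X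
  clopen : ∀ i j, IsClopen (atom i j)
  equivK : ∀ i j j', ∀ μ ∈ K, μ (atom i j) = μ (atom i j')
  partition : ∀ x : X, ∃! p : (i : Fin numCols) × Fin (height i + 1), x ∈ atom p.1 p.2

/-- The base of a KR-partition: the union of the first atoms of the columns. -/
def KRPartition.base {K : Set (ProbabilityMeasure X)} (T : KRPartition X K) : Set X :=
  ⋃ i, T.atom i 0

/-- The top of a KR-partition: the union of the last atoms of the columns. -/
def KRPartition.top {K : Set (ProbabilityMeasure X)} (T : KRPartition X K) : Set X :=
  ⋃ i, T.atom i (Fin.last _)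

/-- `S` refines `T`: the base (resp. top) of `S` is contained in the base (resp. top) of `T`,
and every column of `S` is obtained by cutting and stacking columns of `T`. -/
def KRPartition.Refines {K : Set (ProbabilityMeasure X)} (S T : KRPartition X K) : Prop :=
  S.base ⊆ T.base ∧ S.top ⊆ T.top ∧
  ∀ c : Fin S.numCols, ∃ (m : ℕ) (idx : Fin (m + 1) → Fin T.numCols)
    (piece : (k : Fin (m + 1)) → Fin (T.height (idx k) + 1) → Set X),
    (∀ k j, piece k j ⊆ T.atom (idx k) j) ∧
    (S.height c + 1 = ∑ k : Fin (m + 1), (T.height (idx k) + 1)) ∧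
    ∀ (k : Fin (m + 1)) (j : Fin (T.height (idx k) + 1))
      (hlt : (∑ l ∈ Finset.Iio k, (T.height (idx l) + 1)) + (j : ℕ) < S.height c + 1),
      S.atom c ⟨(∑ l ∈ Finset.Iio k, (T.height (idx l) + 1)) + (j : ℕ), hlt⟩ = piece k j

/-- A KR-partition is compatible with a clopen set `U` if `U` is a union of its atoms,
equivalently every atom is either contained in `U` or disjoint from it. -/
def KRPartition.Compatible {K : Set (ProbabilityMeasure X)} (S : KRPartition X K)
    (U : Set X) : Prop :=
  ∀ i j, S.atom i j ⊆ U ∨ Disjoint (S.atom i j) U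

end DynSimplex

open Set TopologicalSpace

namespace DynSimplex

/-! ### Additivity and labellings -/

section Basic

variable {X : Type*} [MeasurableSpace X]

lemma pm_union (μ : ProbabilityMeasure X) {A B : Set X} (hd : Disjoint A B)
    (hB : MeasurableSet B) : μ (A ∪ B) = μ A + μ B := by
  rw [← ENNReal.coe_inj]
  push_cast
  simp only [ProbabilityMeasure.ennreal_coeFn_eq_coeFn_toMeasure]
  exact measure_union hd hB

lemma pm_inter_add_diff (μ : ProbabilityMeasure X) (A : Set X) {B : Set X}
    (hB : MeasurableSet B) : μ (A ∩ B) + μ (A \ B) = μ A := by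
  rw [← ENNReal.coe_inj]
  push_cast
  simp only [ProbabilityMeasure.ennreal_coeFn_eq_coeFn_toMeasure]
  exact measure_inter_add_sdiff A hB

end Basic

section Label

variable {X : Type*}

/-- The labelling refining `a` by whether a point lies in `C`: the last binary digit of the new
label records membership in `C`, and the others record the old label. -/
noncomputable def refineLabel (a : X → ℕ) (C : Set X) (x : X) : ℕ :=
  open Classical in if x ∈ C then 2 * a x + 1 else 2 * a x

lemma refineLabel_div_two (a : X → ℕ) (C : Set X) (x : X) : refineLabel a C x / 2 = a x := by
  unfold refineLabel
  split_ifs <;> omega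

lemma refineLabel_preimage_odd (a : X → ℕ) (C : Set X) :
    C = refineLabel a C ⁻¹' {i | i % 2 = 1} := by
  ext x
  simp only [mem_preimage, mem_ofPred_eq, refineLabel]
  split_ifs with h <;> simp [h]

lemma refineLabel_fiber_even (a : X → ℕ) (C : Set X) (i : ℕ) :
    refineLabel a C ⁻¹' {2 * i} = a ⁻¹' {i} \ C := by
  ext x
  simp only [mem_preimage, mem_singleton_iff, refineLabel, mem_sdiff]
  split_ifs with h <;> simp [h]
  omega

lemma refineLabel_fiber_odd (a : X → ℕ) (C : Set X) (i : ℕ) :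
    refineLabel a C ⁻¹' {2 * i + 1} = a ⁻¹' {i} ∩ C := by
  ext x
  simp only [mem_preimage, mem_singleton_iff, refineLabel, mem_inter_iff]
  split_ifs with h <;> simp [h]
  omega

end Label

variable {X : Type*} [TopologicalSpace X] [MeasurableSpace X] [OpensMeasurableSpace X]

/-! ### Partial isomorphisms and their extension -/

/-- A finite partial isomorphism for `K`: two locally constant labellings of `X` whose fibres over
each label have the same measure for all `μ ∈ K`. The fibre `a ⁻¹' {i}` is thought of as being
mapped onto `b ⁻¹' {i}`; fibres may be empty. -/
structure Matched (K : Set (ProbabilityMeasure X)) (a b : X → ℕ) : Prop where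
  left : IsLocallyConstant a
  right : IsLocallyConstant b
  eq : ∀ μ ∈ K, ∀ i, μ (a ⁻¹' {i}) = μ (b ⁻¹' {i})

lemma Matched.symm {K : Set (ProbabilityMeasure X)} {a b : X → ℕ} (h : Matched K a b) :
    Matched K b a :=
  ⟨h.right, h.left, fun μ hμ i => (h.eq μ hμ i).symm⟩

lemma measurable_of_isLocallyConstant {a : X → ℕ} (ha : IsLocallyConstant a) : Measurable a :=
  measurable_to_countable' fun i => (ha.isOpen_fiber i).measurableSet

lemma Matched.measure_preimage {K : Set (ProbabilityMeasure X)} {a b : X → ℕ}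
    (h : Matched K a b) {μ : ProbabilityMeasure X} (hμ : μ ∈ K) (p : Set ℕ) :
    (μ : Measure X) (a ⁻¹' p) = (μ : Measure X) (b ⁻¹' p) := by
  have ha := measurable_of_isLocallyConstant h.left
  have hb := measurable_of_isLocallyConstant h.right
  have key : (μ : Measure X).map a = (μ : Measure X).map b := by
    refine Measure.ext_of_singleton fun i => ?_
    rw [Measure.map_apply ha (measurableSet_singleton i),
      Measure.map_apply hb (measurableSet_singleton i)]
    simp only [← ProbabilityMeasure.ennreal_coeFn_eq_coeFn_toMeasure, h.eq μ hμ i]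
  rw [← Measure.map_apply ha (MeasurableSet.of_discrete (s := p)), key,
    Measure.map_apply hb MeasurableSet.of_discrete]

/-- If `P` and `Q` are `K`-equivalent, the part of `P` inside `C` has a `K`-equivalent copy inside
`Q`. Goodness needs a strict inequality: it holds by full support unless `P ⊆ C`, when `Q` itself
serves. -/
lemma exists_cut {K : Set (ProbabilityMeasure X)}
    (hgood : Good K) (hsupp : ∀ μ ∈ K, FullSupport μ) {P Q C : Set X} (hP : IsClopen P)
    (hQ : IsClopen Q) (hC : IsClopen C) (hPQ : ∀ μ ∈ K, μ P = μ Q) :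
    ∃ D, IsClopen D ∧ D ⊆ Q ∧ ∀ μ ∈ K, μ D = μ (P ∩ C) := by
  by_cases hPC : P ⊆ C
  · refine ⟨Q, hQ, subset_rfl, fun μ hμ => ?_⟩
    rw [inter_eq_left.2 hPC, hPQ μ hμ]
  · refine hgood _ _ (hP.inter hC) hQ fun μ hμ => ?_
    have h1 := pm_inter_add_diff μ P hC.isOpen.measurableSet
    have h2 := hsupp μ hμ _ (hP.diff hC).isOpen (sdiff_nonempty.2 hPC)
    rw [← hPQ μ hμ, ← h1]
    exact lt_add_of_pos_right _ h2

lemma isLocallyConstant_refineLabel {Y : Type*} [TopologicalSpace Y] {a : Y → ℕ}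
    (ha : IsLocallyConstant a) {C : Set Y} (hC : IsClopen C) :
    IsLocallyConstant (refineLabel a C) := by
  refine IsLocallyConstant.iff_isOpen_fiber.2 fun j => ?_
  obtain ⟨i, rfl | rfl⟩ := j.even_or_odd'
  · rw [refineLabel_fiber_even]
    exact ((ha.isClopen_fiber i).diff hC).isOpen
  · rw [refineLabel_fiber_odd]
    exact ((ha.isClopen_fiber i).inter hC).isOpen

lemma Matched.refineLabel {K : Set (ProbabilityMeasure X)} {a b : X → ℕ} (h : Matched K a b)
    {C D : Set X} (hC : IsClopen C) (hD : IsClopen D)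
    (hCD : ∀ μ ∈ K, ∀ i, μ (a ⁻¹' {i} ∩ C) = μ (b ⁻¹' {i} ∩ D)) :
    Matched K (refineLabel a C) (refineLabel b D) := by
  refine ⟨isLocallyConstant_refineLabel h.left hC, isLocallyConstant_refineLabel h.right hD,
    fun μ hμ j => ?_⟩
  obtain ⟨i, rfl | rfl⟩ := j.even_or_odd'
  · rw [refineLabel_fiber_even, refineLabel_fiber_even]
    have h1 := pm_inter_add_diff μ (a ⁻¹' {i}) hC.isOpen.measurableSet
    have h2 := pm_inter_add_diff μ (b ⁻¹' {i}) hD.isOpen.measurableSet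
    rw [h.eq μ hμ i, ← h2, hCD μ hμ i] at h1
    exact add_left_cancel h1
  · rw [refineLabel_fiber_odd, refineLabel_fiber_odd]
    exact hCD μ hμ i

/-- One half of the back-and-forth step: a clopen cut on the left side can be matched by a clopen
cut on the right side. -/
lemma Matched.forth {K : Set (ProbabilityMeasure X)} (hgood : Good K)
    (hsupp : ∀ μ ∈ K, FullSupport μ) {a b : X → ℕ} (h : Matched K a b) {C : Set X}
    (hC : IsClopen C) :
    ∃ D, Matched K (DynSimplex.refineLabel a C) (DynSimplex.refineLabel b D) := by
  choose D hD hDb hDμ using fun i => exists_cut hgood hsupp (h.left.isClopen_fiber i)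
    (h.right.isClopen_fiber i) hC fun μ hμ => h.eq μ hμ i
  -- The pieces `D i` lie in distinct fibres of `b`; their union is clopen since `b` is locally
  -- constant.
  have hinter : ∀ i, b ⁻¹' {i} ∩ {y | y ∈ D (b y)} = D i := by
    intro i
    ext y
    constructor
    · rintro ⟨rfl, hy⟩
      exact hy
    · intro hy
      have : b y = i := hDb i hy
      exact ⟨this, by rw [mem_ofPred_eq, this]; exact hy⟩
  have hopen : IsOpen {y | y ∈ D (b y)} := by
    have : {y | y ∈ D (b y)} = ⋃ i, D i := by
      ext y
      exact ⟨fun hy => mem_iUnion.2 ⟨_, hy⟩, fun hy => by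
        obtain ⟨i, hi⟩ := mem_iUnion.1 hy
        exact ((hinter i).symm ▸ hi).2⟩
    rw [this]
    exact isOpen_iUnion fun i => (hD i).isOpen
  have hopen' : IsOpen {y | y ∈ D (b y)}ᶜ := by
    have : {y | y ∈ D (b y)}ᶜ = ⋃ i, b ⁻¹' {i} \ D i := by
      ext y
      simp
    rw [this]
    exact isOpen_iUnion fun i => ((h.right.isClopen_fiber i).diff (hD i)).isOpen
  refine ⟨{y | y ∈ D (b y)}, h.refineLabel hC ⟨⟨hopen'⟩, hopen⟩ fun μ hμ i => ?_⟩
  rw [hinter, hDμ i μ hμ]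
  rfl

/-- The full back-and-forth step: the new labels determine the old ones (through a common map),
and `C` becomes a union of fibres on both sides. -/
lemma Matched.step {K : Set (ProbabilityMeasure X)} (hgood : Good K)
    (hsupp : ∀ μ ∈ K, FullSupport μ) {a b : X → ℕ} (h : Matched K a b) {C : Set X}
    (hC : IsClopen C) :
    ∃ a' b', Matched K a' b' ∧ (∀ x, a' x / 2 / 2 = a x) ∧ (∀ x, b' x / 2 / 2 = b x) ∧
      (∃ p, C = a' ⁻¹' p) ∧ ∃ p, C = b' ⁻¹' p := by
  obtain ⟨D, hD⟩ := h.forth hgood hsupp hC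
  obtain ⟨E, hE⟩ := hD.symm.forth hgood hsupp hC
  refine ⟨_, _, hE.symm, fun x => ?_, fun x => ?_, ⟨(· / 2) ⁻¹' {i | i % 2 = 1}, ?_⟩,
    _, refineLabel_preimage_odd _ _⟩
  · rw [refineLabel_div_two, refineLabel_div_two]
  · rw [refineLabel_div_two, refineLabel_div_two]
  · rw [← preimage_comp]
    convert refineLabel_preimage_odd a C using 2
    exact funext fun x => refineLabel_div_two _ _ x

/-! ### The limit homeomorphism -/

/-- By compactness, refining sequences of matched labellings allow one to follow a point of the
left side to the right side. -/
lemma exists_partner [CompactSpace X] {K : Set (ProbabilityMeasure X)} (hne : K.Nonempty)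
    (hsupp : ∀ μ ∈ K, FullSupport μ) {a b : ℕ → X → ℕ} (h : ∀ n, Matched K (a n) (b n))
    (ha : ∀ n x, a (n + 1) x / 2 / 2 = a n x) (hb : ∀ n x, b (n + 1) x / 2 / 2 = b n x) (x : X) :
    ∃ y, ∀ n, b n y = a n x := by
  obtain ⟨μ, hμ⟩ := hne
  have := IsCompact.nonempty_iInter_of_sequence_nonempty_isCompact_isClosed
    (fun n => b n ⁻¹' {a n x}) (fun n y hy => ?_) (fun n => ?_) ?_ ?_
  · obtain ⟨y, hy⟩ := this
    exact ⟨y, fun n => mem_iInter.1 hy n⟩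
  · have hy' : b (n + 1) y = a (n + 1) x := hy
    change b n y = a n x
    rw [← ha, ← hb, hy']
  · have hpos := hsupp μ hμ _ ((h n).left.isOpen_fiber (a n x)) ⟨x, rfl⟩
    change 0 < μ (a n ⁻¹' {a n x}) at hpos
    rw [(h n).eq μ hμ] at hpos
    rw [nonempty_iff_ne_empty]
    intro h0
    rw [h0] at hpos
    simp at hpos
  · exact ((h 0).right.isClosed_fiber _).isCompact
  · exact fun n => (h n).right.isClosed_fiber _

/-- `K`-equivalent clopen sets are mapped one onto the other by a homeomorphism preserving every
measure in `K`. -/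
lemma exists_homeo {X : Type*} [TopologicalSpace X] [CompactSpace X] [MetrizableSpace X]
    [TotallyDisconnectedSpace X] [MeasurableSpace X] [BorelSpace X]
    {K : Set (ProbabilityMeasure X)} (hne : K.Nonempty) (hgood : Good K)
    (hsupp : ∀ μ ∈ K, FullSupport μ) {U V : Set X} (hU : IsClopen U) (hV : IsClopen V)
    (hUV : ∀ μ ∈ K, μ U = μ V) :
    ∃ h : X ≃ₜ X, PreservesAll K h ∧ h ⁻¹' V = U := by
  have hsc : SecondCountableTopology X := by
    let := metrizableSpaceMetric X
    infer_instance
  have : Countable (Clopens X) := Clopens.countable_iff_secondCountable.2 hsc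
  obtain ⟨e, he⟩ := exists_surjective_nat (Clopens X)
  have h0 : Matched K (refineLabel (fun _ => 0) U) (refineLabel (fun _ => 0) V) := by
    refine Matched.refineLabel ⟨.const 0, .const 0, fun _ _ _ => rfl⟩ hU hV fun μ hμ i => ?_
    rcases eq_or_ne i 0 with rfl | hi
    · have : (fun _ : X => 0) ⁻¹' {0} = univ := by ext; simp
      change μ ((fun _ : X => 0) ⁻¹' {0} ∩ U) = μ ((fun _ : X => 0) ⁻¹' {0} ∩ V)
      rw [this, univ_inter, univ_inter, hUV μ hμ]
    · have : (fun _ : X => 0) ⁻¹' {i} = ∅ := by ext; simp [hi.symm]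
      change μ ((fun _ : X => 0) ⁻¹' {i} ∩ U) = μ ((fun _ : X => 0) ⁻¹' {i} ∩ V)
      rw [this, empty_inter, empty_inter]
  let S := {p : (X → ℕ) × (X → ℕ) // Matched K p.1 p.2}
  have hstep : ∀ (C : Clopens X) (s : S), ∃ t : S, (∀ x, t.1.1 x / 2 / 2 = s.1.1 x) ∧
      (∀ x, t.1.2 x / 2 / 2 = s.1.2 x) ∧
      (∃ p, (C : Set X) = t.1.1 ⁻¹' p) ∧ ∃ p, (C : Set X) = t.1.2 ⁻¹' p := by
    intro C s
    obtain ⟨a', b', h, h'⟩ := s.2.step hgood hsupp C.isClopen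
    exact ⟨⟨(a', b'), h⟩, h'⟩
  choose f hf using hstep
  let s : ℕ → S := fun n => Nat.rec ⟨(_, _), h0⟩ (fun n t => f (e n) t) n
  let a : ℕ → X → ℕ := fun n => (s n).1.1
  let b : ℕ → X → ℕ := fun n => (s n).1.2
  have hab : ∀ n, Matched K (a n) (b n) := fun n => (s n).2
  have ha : ∀ n x, a (n + 1) x / 2 / 2 = a n x := fun n => (hf (e n) (s n)).1
  have hb : ∀ n x, b (n + 1) x / 2 / 2 = b n x := fun n => (hf (e n) (s n)).2.1
  have hCa : ∀ C : Set X, IsClopen C → ∃ n p, C = a n ⁻¹' p := by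
    intro C hC
    obtain ⟨n, hn⟩ := he ⟨C, hC⟩
    obtain ⟨p, hp⟩ := (hf (e n) (s n)).2.2.1
    exact ⟨n + 1, p, (congrArg (fun D : Clopens X => (D : Set X)) hn).symm.trans hp⟩
  have hCb : ∀ C : Set X, IsClopen C → ∃ n p, C = b n ⁻¹' p := by
    intro C hC
    obtain ⟨n, hn⟩ := he ⟨C, hC⟩
    obtain ⟨p, hp⟩ := (hf (e n) (s n)).2.2.2
    exact ⟨n + 1, p, (congrArg (fun D : Clopens X => (D : Set X)) hn).symm.trans hp⟩
  have hbasis : IsTopologicalBasis {s : Set X | IsClopen s} := isTopologicalBasis_isClopen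
  have sep : ∀ c : ℕ → X → ℕ, (∀ C : Set X, IsClopen C → ∃ n p, C = c n ⁻¹' p) →
      ∀ x y, (∀ n, c n x = c n y) → x = y := by
    intro c hc x y hxy
    by_contra hne
    obtain ⟨C, hC, hxC, hyC⟩ := hbasis.exists_subset_of_mem_open
      (show x ∈ ({y}ᶜ : Set X) from hne) isOpen_compl_singleton
    obtain ⟨n, p, rfl⟩ := hc C hC
    refine hyC (a := y) ?_ rfl
    rw [mem_preimage, ← hxy n]
    exact hxC
  choose F hF using exists_partner hne hsupp hab ha hb
  choose G hG using exists_partner hne hsupp (fun n => (hab n).symm) hb ha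
  have hFcont : Continuous F := by
    refine hbasis.continuous_iff.2 fun C hC => ?_
    obtain ⟨n, p, rfl⟩ := hCb C hC
    have : F ⁻¹' (b n ⁻¹' p) = a n ⁻¹' p := by
      ext x
      simp [hF]
    rw [this]
    exact (hab n).left p
  have hGcont : Continuous G := by
    refine hbasis.continuous_iff.2 fun C hC => ?_
    obtain ⟨n, p, rfl⟩ := hCa C hC
    have : G ⁻¹' (a n ⁻¹' p) = b n ⁻¹' p := by
      ext x
      simp [hG]
    rw [this]
    exact (hab n).right p
  let h : X ≃ₜ X :=
    { toFun := F
      invFun := G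
      left_inv := fun x => sep a hCa _ _ fun n => by rw [hG, hF]
      right_inv := fun x => sep b hCb _ _ fun n => by rw [hF, hG]
      continuous_toFun := hFcont
      continuous_invFun := hGcont }
  refine ⟨h, fun μ hμ => ?_, ?_⟩
  · change (μ : Measure X).map F = (μ : Measure X)
    have hgen : ‹MeasurableSpace X› = MeasurableSpace.generateFrom {s : Set X | IsClopen s} := by
      rw [BorelSpace.measurable_eq (α := X), hbasis.borel_eq_generateFrom]
    have := Measure.isProbabilityMeasure_map (μ := (μ : Measure X)) hFcont.measurable.aemeasurable
    refine ext_of_generate_finite _ hgen (fun A hA B hB _ => hA.inter hB) (fun C hC => ?_) ?_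
    · rw [Measure.map_apply hFcont.measurable (IsClopen.isOpen hC).measurableSet]
      obtain ⟨n, p, rfl⟩ := hCb C hC
      have : F ⁻¹' (b n ⁻¹' p) = a n ⁻¹' p := by
        ext x
        simp [hF]
      rw [this, (hab n).measure_preimage hμ]
    · rw [measure_univ, measure_univ]
  · rw [refineLabel_preimage_odd (fun _ => 0) U, refineLabel_preimage_odd (fun _ => 0) V]
    ext x
    have : refineLabel (fun _ => 0) V (F x) = refineLabel (fun _ => 0) U x := hF x 0
    rw [mem_preimage, mem_preimage, mem_preimage, show h x = F x from rfl, this]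

/-! ### Disjoint copies of a clopen set -/

/-- Under goodness, `m` disjoint `K`-equivalent copies of `A` can be found as long as `m ≤ n`;
the set `T` is their union. Each copy is the image of `A` under a homeomorphism preserving `K`, so
it has the same `ν`-measure as `A`. -/
lemma exists_multiple {X : Type*} [TopologicalSpace X] [CompactSpace X] [MetrizableSpace X]
    [TotallyDisconnectedSpace X] [MeasurableSpace X] [BorelSpace X]
    {K : Set (ProbabilityMeasure X)} (hne : K.Nonempty) (hgood : Good K)
    (hsupp : ∀ μ ∈ K, FullSupport μ) {ν : ProbabilityMeasure X}
    (hν : ∀ h : X ≃ₜ X, PreservesAll K h → Preserves h ν) {A : Set X} (hA : IsClopen A) {n : ℕ}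
    (hlt : ∀ μ ∈ K, n * μ A < 1) (m : ℕ) (hm : m ≤ n) :
    ∃ T, IsClopen T ∧ (∀ μ ∈ K, μ T = m * μ A) ∧ ν T = m * ν A := by
  induction m with
  | zero => exact ⟨∅, isClopen_empty, by simp, by simp⟩
  | succ m ih =>
    obtain ⟨T, hT, hTK, hTν⟩ := ih (by omega)
    obtain ⟨C, hC, hCT, hCK⟩ := hgood A Tᶜ hA hT.compl fun μ hμ => by
      have h1 : μ T + μ Tᶜ = 1 := by
        rw [← pm_union μ disjoint_compl_right hT.compl.isOpen.measurableSet, union_compl_self]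
        simp
      have h2 : ((m + 1 : ℕ) : NNReal) * μ A < 1 :=
        lt_of_le_of_lt (mul_le_mul_left (Nat.cast_le.2 hm) _) (hlt μ hμ)
      rw [← h1, hTK μ hμ, Nat.cast_succ, add_mul, one_mul] at h2
      exact lt_of_add_lt_add_left h2
    obtain ⟨h, hK, hpre⟩ := exists_homeo hne hgood hsupp hA hC fun μ hμ => (hCK μ hμ).symm
    have hCν : ν C = ν A := by
      have : (ν : Measure X).map h C = (ν : Measure X) C := by rw [hν h hK]
      rw [Measure.map_apply h.continuous.measurable hC.isOpen.measurableSet, hpre] at this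
      rw [← ENNReal.coe_inj]
      simp only [ProbabilityMeasure.ennreal_coeFn_eq_coeFn_toMeasure]
      exact this.symm
    have hd : Disjoint T C := (disjoint_compl_right (a := T)).mono_right hCT
    refine ⟨T ∪ C, hT.union hC, fun μ hμ => ?_, ?_⟩
    · rw [pm_union μ hd hC.isOpen.measurableSet, hTK μ hμ, hCK μ hμ]
      push_cast
      ring
    · rw [pm_union ν hd hC.isOpen.measurableSet, hTν, hCν]
      push_cast
      ring

end DynSimplex

theorem G_invariant_measure_le_of_lt_inv
    {X : Type*} [TopologicalSpace X] [CompactSpace X]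
    [TopologicalSpace.MetrizableSpace X] [TotallyDisconnectedSpace X] [PerfectSpace X]
    [Nonempty X] [MeasurableSpace X] [BorelSpace X]
    (K : Set (MeasureTheory.ProbabilityMeasure X)) (hne : K.Nonempty)
    (hgood : DynSimplex.Good K) (hsupp : ∀ μ ∈ K, DynSimplex.FullSupport μ)
    (ν : MeasureTheory.ProbabilityMeasure X)
    (hν : ∀ h : X ≃ₜ X, DynSimplex.PreservesAll K h → DynSimplex.Preserves h ν)
    (A : Set X) (hA : IsClopen A) (n : ℕ) (hn : 1 ≤ n)
    (hlt : ∀ μ ∈ K, (μ A : ℝ) < 1 / (n : ℝ)) :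
    (ν A : ℝ) ≤ 1 / (n : ℝ) := by
  have hn0 : (0 : ℝ) < n := by exact_mod_cast hn
  obtain ⟨T, -, -, hT⟩ := DynSimplex.exists_multiple hne hgood hsupp hν hA (n := n)
    (fun μ hμ => by
      have := hlt μ hμ
      rw [lt_div_iff₀ hn0, mul_comm] at this
      exact_mod_cast this) n le_rfl
  have h1 : (n : NNReal) * ν A ≤ 1 := hT ▸ ν.apply_le_one T
  rw [le_div_iff₀ hn0, mul_comm]
  exact_mod_cast h1
end

section
/- Let X be a Cantor space, K a dynamical simplex on X, and G the group of all homeomorphisms of X preserving every measure in K, endowed with the topology of uniform convergence. Then every minimal homeomorphism belonging to G lies in the closure (in G) of the set of K-saturated elements of G. -/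
/-!
The homeomorphism `g` is approximated by limits of cutting-and-stacking constructions.

A column is a list of nonempty clopen sets having the same measure for every `μ ∈ K`, and a finite
multiset `T` of columns whose atoms partition `X` prescribes a relation `Link T`: a point may be
sent to any point of the atom just above its own, and a point of the top to any point of the base.
Cutting columns and stacking `K`-equivalent ones (`Ref`) shrinks the base, the top and `Link`
(`Ref.sub`).

* Start (`exists_tower`): for a locally constant function `c` on `X`, take a fibre `B` of `c` as
  base and group the points of `B` by their `c`-names up to the first return to `B` under `g`, which
  is bounded by minimality. Every `h` following the resulting columns satisfies `c ∘ h = c ∘ g`, so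
  `h` is uniformly close to `g` once the fibres of `c` are small (`exists_small_fibres`).
* Refinement (`exists_stage`): goodness allows one to stack a column on part of any family of
  columns whose bases have a union of larger measure for all `μ ∈ K` (`stackOn`). With the fact that
  fine clopen sets have uniformly small measure (`exists_small`, by compactness of `K` and
  atomlessness) this moves base and top into the base and the top of one column (`concentrate`),
  hence to one side of any given clopen set. If `U ∼_K V`, write `wt U V L` for the number of atoms
  of `L` in `U` minus the number of those in `V`; the sum of `wt U V L * μ (base L)` over all columns
  vanishes, so a column with the largest weight `N > 0` (or `-N`) has at most the measure
  of the columns of opposite sign together, with equality for all `μ` or for none, and can be stacked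
  on them. Iterating makes all weights zero (`balance`).
* Limit (`exists_limit`): iterate along an enumeration of all pairs of clopen sets
  (`exists_sequence`). Since each clopen set is eventually a union of atoms with base and top on one
  side of it, the relations `Link` shrink to the graph of a homeomorphism `h`. It maps each atom but
  the top ones to the next, whence it preserves every `μ ∈ K` (`preservesAll_limit`); and when
  `U ∼_K V`, permuting the levels of balanced columns, by powers of `h`, maps `U` onto `V`
  (`exists_of_balanced`).
-/

open MeasureTheory

namespace DynSimplex.Proof

section columns

/-! ### Columns -/

open scoped Classical in
/-- Number of members of the multiset `s` of sets (with multiplicity) that contain `x`. -/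
noncomputable def cnt {X : Type*} (s : Multiset (Set X)) (x : X) : ℕ :=
  s.countP (fun B => x ∈ B)

/-- All the atoms of a family of columns, a column being the list of its atoms from bottom
to top. -/
def atoms {X : Type*} (T : Multiset (List (Set X))) : Multiset (Set X) :=
  T.bind (fun L => (L : Multiset (Set X)))

/-- The lowest atom of a column (`∅` for the empty list). -/
def base {X : Type*} (L : List (Set X)) : Set X := L.headD ∅

/-- The highest atom of a column, defined as the base of the reversed column. -/
def top {X : Type*} (L : List (Set X)) : Set X := base L.reverse

/-- `L'` is a piece of the column `L`: level by level it is a nonempty subset. -/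
def Piece {X : Type*} (L' L : List (Set X)) : Prop :=
  List.Forall₂ (fun B' B : Set X => B' ⊆ B ∧ B'.Nonempty) L' L

/-- The relation, `y` is a possible image of `x`, prescribed by a family of columns: `y` lies in
the atom just above that of `x`, or `x` lies in the top and `y` in the base. -/
def Link {X : Type*} (T : Multiset (List (Set X))) (x y : X) : Prop :=
  (∃ L ∈ T, ∃ (j : ℕ) (h : j + 1 < L.length), x ∈ L[j] ∧ y ∈ L[j + 1]) ∨
    ((∃ L ∈ T, x ∈ top L) ∧ ∃ L ∈ T, y ∈ base L)

variable {X : Type*} [TopologicalSpace X] [MeasurableSpace X]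

/-- A column for `K`: a nonempty list of nonempty clopen, pairwise `K`-equivalent sets. -/
structure IsCol (K : Set (ProbabilityMeasure X)) (L : List (Set X)) : Prop where
  ne : L ≠ []
  clopen : ∀ B ∈ L, IsClopen B
  nonempty : ∀ B ∈ L, B.Nonempty
  eqv : ∀ B ∈ L, ∀ B' ∈ L, ∀ μ ∈ K, μ B = μ B'

/-- A family of columns all of whose atoms are pairwise disjoint. -/
structure PV (K : Set (ProbabilityMeasure X)) (T : Multiset (List (Set X))) : Prop where
  cols : ∀ L ∈ T, IsCol K L
  cnt_le : ∀ x, cnt (atoms T) x ≤ 1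

/-- Elementary refinements of a family of columns: cutting one column vertically into two, and
stacking a column `M` on top of a `K`-equivalent column `L`. -/
inductive Step (K : Set (ProbabilityMeasure X)) :
    Multiset (List (Set X)) → Multiset (List (Set X)) → Prop
  | cut (L : List (Set X)) (f : Set X → Set X) (T : Multiset (List (Set X)))
      (hf : ∀ B ∈ L, IsClopen (f B) ∧ f B ⊆ B ∧ (f B).Nonempty ∧ (B \ f B).Nonempty)
      (he : ∀ B ∈ L, ∀ B' ∈ L, ∀ μ ∈ K, μ (f B) = μ (f B')) :
      Step K (L ::ₘ T) (L.map f ::ₘ L.map (fun B => B \ f B) ::ₘ T)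
  | stack (L M : List (Set X)) (T : Multiset (List (Set X)))
      (he : ∀ B ∈ L, ∀ B' ∈ M, ∀ μ ∈ K, μ B = μ B') :
      Step K (L ::ₘ M ::ₘ T) ((L ++ M) ::ₘ T)

/-- `Ref K T S`: the family `S` is obtained from `T` by finitely many cuts and stackings. -/
def Ref (K : Set (ProbabilityMeasure X)) (T S : Multiset (List (Set X))) : Prop :=
  Relation.ReflTransGen (Step K) T S

variable {K : Set (ProbabilityMeasure X)} {S T R : Multiset (List (Set X))}

/-! ### Generalities on counts, bases and pieces -/

section basics
variable {Y : Type*}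


@[simp] lemma cnt_zero (x : Y) : cnt (0 : Multiset (Set Y)) x = 0 := by simp [cnt]

@[simp] lemma cnt_add (s t : Multiset (Set Y)) (x : Y) : cnt (s + t) x = cnt s x + cnt t x := by
  simp [cnt]

open scoped Classical in
lemma cnt_cons (B : Set Y) (s : Multiset (Set Y)) (x : Y) :
    cnt (B ::ₘ s) x = cnt s x + if x ∈ B then 1 else 0 := by
  simp [cnt, Multiset.countP_cons]

open scoped Classical in
lemma cnt_mono {s t : Multiset (Set Y)} (h : s ≤ t) (x : Y) : cnt s x ≤ cnt t x :=
  Multiset.countP_le_of_le _ h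

open scoped Classical in
lemma cnt_pos {s : Multiset (Set Y)} {x : Y} : 0 < cnt s x ↔ ∃ B ∈ s, x ∈ B :=
  Multiset.countP_pos

@[simp] lemma atoms_zero : atoms (0 : Multiset (List (Set Y))) = 0 := rfl

@[simp] lemma atoms_cons (L : List (Set Y)) (T : Multiset (List (Set Y))) :
    atoms (L ::ₘ T) = (L : Multiset (Set Y)) + atoms T := by simp [atoms]

@[simp] lemma atoms_add (S T : Multiset (List (Set Y))) :
    atoms (S + T) = atoms S + atoms T := by simp [atoms]

lemma mem_atoms {T : Multiset (List (Set Y))} {B : Set Y} :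
    B ∈ atoms T ↔ ∃ L ∈ T, B ∈ L := by simp [atoms]

lemma base_mem {L : List (Set Y)} (h : L ≠ []) : base L ∈ L := by
  cases L with
  | nil => exact absurd rfl h
  | cons a l => simp [base]

lemma base_append {L M : List (Set Y)} (h : L ≠ []) : base (L ++ M) = base L := by
  cases L with
  | nil => exact absurd rfl h
  | cons a l => simp [base]

lemma base_map {L : List (Set Y)} (h : L ≠ []) (f : Set Y → Set Y) :
    base (L.map f) = f (base L) := by
  cases L with
  | nil => exact absurd rfl h
  | cons a l => simp [base]

lemma top_mem {L : List (Set Y)} (h : L ≠ []) : top L ∈ L := by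
  have := base_mem (L := L.reverse) (by simpa using h)
  simpa [top] using this

lemma top_append {L M : List (Set Y)} (h : M ≠ []) : top (L ++ M) = top M := by
  simp only [top, List.reverse_append]
  exact base_append (by simpa using h)

lemma top_map {L : List (Set Y)} (h : L ≠ []) (f : Set Y → Set Y) :
    top (L.map f) = f (top L) := by
  simp only [top, ← List.map_reverse]
  exact base_map (by simpa using h) f

lemma base_eq_getElem {L : List (Set Y)} (h : 0 < L.length) : base L = L[0] := by
  cases L with
  | nil => simp at h
  | cons a l => simp [base]

lemma top_eq_getElem {L : List (Set Y)} (h : 0 < L.length) :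
    top L = L[L.length - 1] := by
  rw [top, base_eq_getElem (by simpa using h)]
  simp

lemma Piece.refl {L : List (Set Y)} (h : ∀ B ∈ L, B.Nonempty) : Piece L L := by
  unfold Piece
  rw [List.forall₂_same]
  exact fun B hB => ⟨subset_rfl, h B hB⟩

lemma Piece.trans {L M N : List (Set Y)} (h : Piece L M) (h' : Piece M N) : Piece L N := by
  unfold Piece at *
  induction h' generalizing L with
  | nil => exact h
  | cons ha _ ih =>
    cases h with
    | cons hb ht => exact .cons ⟨hb.1.trans ha.1, hb.2⟩ (ih ht)

lemma Piece.map {L : List (Set Y)} {f : Set Y → Set Y}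
    (h : ∀ B ∈ L, f B ⊆ B ∧ (f B).Nonempty) : Piece (L.map f) L := by
  unfold Piece
  rw [List.forall₂_map_left_iff, List.forall₂_same]
  exact h

lemma cnt_cut (L : List (Set Y)) (f : Set Y → Set Y) (h : ∀ B ∈ L, f B ⊆ B) (x : Y) :
    cnt (L.map f : Multiset (Set Y)) x + cnt (L.map (fun B => B \ f B) : Multiset (Set Y)) x
      = cnt (L : Multiset (Set Y)) x := by
  induction L with
  | nil => simp
  | cons B l ih =>
    have ih := ih (fun B' hB' => h B' (by simp [hB']))
    have hB := h B (by simp)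
    simp only [List.map_cons, ← Multiset.cons_coe, cnt_cons]
    rw [← ih]
    by_cases h1 : x ∈ f B
    · have h2 := hB h1
      simp [h1, h2]; omega
    · by_cases h2 : x ∈ B <;> simp [h1, h2]; omega

end basics

/-! ### Refinement by cutting and stacking -/

lemma Step.add_right (h : Step K T S) (R : Multiset (List (Set X))) :
    Step K (T + R) (S + R) := by
  cases h with
  | cut L f T hf he => simpa using Step.cut L f (T + R) hf he
  | stack L M T he => simpa using Step.stack L M (T + R) he

lemma Ref.refl (T : Multiset (List (Set X))) : Ref K T T := Relation.ReflTransGen.refl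

lemma Ref.trans (h : Ref K T S) (h' : Ref K S R) : Ref K T R :=
  Relation.ReflTransGen.trans h h'

lemma Step.ref (h : Step K T S) : Ref K T S := Relation.ReflTransGen.single h

lemma Ref.add_right (h : Ref K T S) (R : Multiset (List (Set X))) :
    Ref K (T + R) (S + R) := by
  induction h with
  | refl => exact Ref.refl _
  | tail _ h ih => exact ih.trans (h.add_right R).ref

lemma Ref.add_left (h : Ref K T S) (R : Multiset (List (Set X))) :
    Ref K (R + T) (R + S) := by
  rw [add_comm R, add_comm R]; exact h.add_right R

lemma Ref.add {S' T' : Multiset (List (Set X))} (h : Ref K T S) (h' : Ref K T' S') :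
    Ref K (T + T') (S + S') :=
  (h.add_right T').trans (h'.add_left S)

lemma Ref.cons (h : Ref K T S) (L : List (Set X)) : Ref K (L ::ₘ T) (L ::ₘ S) := by
  simpa using h.add_left {L}

lemma Step.reverse (h : Step K T S) :
    Step K (T.map List.reverse) (S.map List.reverse) := by
  cases h with
  | cut L f T hf he =>
    simp only [Multiset.map_cons, ← List.map_reverse]
    exact Step.cut _ _ _ (by simpa using hf) (by simpa using he)
  | stack L M T he =>
    simp only [Multiset.map_cons, List.reverse_append]
    rw [Multiset.cons_swap]
    exact Step.stack _ _ _ (fun B hB B' hB' μ hμ =>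
      (he B' (by simpa using hB') B (by simpa using hB) μ hμ).symm)

lemma Ref.reverse (h : Ref K T S) :
    Ref K (T.map List.reverse) (S.map List.reverse) := by
  induction h with
  | refl => exact Ref.refl _
  | tail _ h ih => exact ih.trans h.reverse.ref

lemma Step.cnt_atoms (h : Step K T S) (x : X) : cnt (atoms S) x = cnt (atoms T) x := by
  cases h with
  | cut L f T hf he =>
    have := cnt_cut L f (fun B hB => (hf B hB).2.1) x
    simp only [atoms_cons, cnt_add]; omega
  | stack L M T he =>
    simp only [atoms_cons, cnt_add, ← Multiset.coe_add]; omega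

lemma Ref.cnt_atoms (h : Ref K T S) (x : X) : cnt (atoms S) x = cnt (atoms T) x := by
  induction h with
  | refl => rfl
  | tail _ h ih => rw [h.cnt_atoms, ih]

lemma measure_add_sdiff [OpensMeasurableSpace X] {B C : Set X} (hC : IsClopen C) (h : C ⊆ B)
    (μ : ProbabilityMeasure X) : μ C + μ (B \ C) = μ B := by
  have := measure_inter_add_sdiff (μ := (μ : Measure X)) B hC.2.measurableSet
  rw [Set.inter_eq_right.2 h] at this
  rw [← ENNReal.coe_inj]
  push_cast
  simpa using this

lemma Step.cols [OpensMeasurableSpace X] (h : Step K T S) (hT : ∀ L ∈ T, IsCol K L) :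
    ∀ L ∈ S, IsCol K L := by
  cases h with
  | cut L f T hf he =>
    have hL := hT L (by simp)
    intro M hM
    simp only [Multiset.mem_cons] at hM
    rcases hM with rfl | rfl | hM
    · refine ⟨by simpa using hL.ne, ?_, ?_, ?_⟩
      · simpa using fun B hB => (hf B hB).1
      · simpa using fun B hB => (hf B hB).2.2.1
      · simpa using he
    · refine ⟨by simpa using hL.ne, ?_, ?_, ?_⟩
      · simpa using fun B hB => (hL.clopen B hB).diff (hf B hB).1
      · simpa using fun B hB => (hf B hB).2.2.2
      · have key : ∀ B ∈ L, ∀ μ ∈ K, μ (f B) + μ (B \ f B) = μ B := by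
          intro B hB μ _
          exact measure_add_sdiff (hf B hB).1 (hf B hB).2.1 μ
        simp only [List.mem_map, forall_exists_index, and_imp, forall_apply_eq_imp_iff₂]
        intro B hB B' hB' μ hμ
        have h1 := key B hB μ hμ
        have h2 := key B' hB' μ hμ
        rw [hL.eqv B hB B' hB' μ hμ, ← h2, he B hB B' hB' μ hμ] at h1
        exact add_left_cancel h1
    · exact hT M (by simp [hM])
  | stack L M T he =>
    have hL := hT L (by simp)
    have hM := hT M (by simp)
    intro N hN
    simp only [Multiset.mem_cons] at hN
    rcases hN with rfl | hN
    · refine ⟨by simp [hL.ne], ?_, ?_, ?_⟩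
      · intro B hB
        rcases List.mem_append.1 hB with h | h
        exacts [hL.clopen B h, hM.clopen B h]
      · intro B hB
        rcases List.mem_append.1 hB with h | h
        exacts [hL.nonempty B h, hM.nonempty B h]
      · intro B hB B' hB' μ hμ
        rcases List.mem_append.1 hB with h | h <;> rcases List.mem_append.1 hB' with h' | h'
        · exact hL.eqv B h B' h' μ hμ
        · exact he B h B' h' μ hμ
        · exact (he B' h' B h μ hμ).symm
        · exact hM.eqv B h B' h' μ hμ
    · exact hT N (by simp [hN])

lemma Ref.cols [OpensMeasurableSpace X] (h : Ref K T S) (hT : ∀ L ∈ T, IsCol K L) :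
    ∀ L ∈ S, IsCol K L := by
  induction h with
  | refl => exact hT
  | tail _ h ih => exact h.cols ih

lemma Ref.pv [OpensMeasurableSpace X] (h : Ref K T S) (hT : PV K T) : PV K S :=
  ⟨h.cols hT.cols, fun x => by rw [h.cnt_atoms]; exact hT.cnt_le x⟩

lemma PV.left (h : PV K (S + T)) : PV K S :=
  ⟨fun L hL => h.cols L (by simp [hL]), fun x => by
    have := h.cnt_le x; simp at this; omega⟩

lemma PV.right (h : PV K (S + T)) : PV K T := by
  rw [add_comm] at h; exact h.left

/-- Every atom of a refinement lies in an atom of the original family. -/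
lemma Step.atom_sub (h : Step K T S) : ∀ B ∈ atoms S, ∃ B' ∈ atoms T, B ⊆ B' := by
  intro B hB
  cases h with
  | cut L f T hf he =>
    simp only [atoms_cons, Multiset.mem_add, Multiset.mem_coe, List.mem_map] at hB
    rcases hB with ⟨C, hC, rfl⟩ | ⟨C, hC, rfl⟩ | hB
    · exact ⟨C, by simp [hC], (hf C hC).2.1⟩
    · exact ⟨C, by simp [hC], Set.sdiff_subset⟩
    · exact ⟨B, by simp [hB], subset_rfl⟩
  | stack L M T he =>
    refine ⟨B, ?_, subset_rfl⟩
    simp at hB ⊢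
    tauto

lemma Ref.atom_sub (h : Ref K T S) : ∀ B ∈ atoms S, ∃ B' ∈ atoms T, B ⊆ B' := by
  induction h with
  | refl => exact fun B hB => ⟨B, hB, subset_rfl⟩
  | tail _ h ih =>
    intro B hB
    obtain ⟨C, hC, h1⟩ := h.atom_sub B hB
    obtain ⟨D, hD, h2⟩ := ih C hC
    exact ⟨D, hD, h1.trans h2⟩

lemma Step.base_sub (h : Step K T S) (hT : ∀ L ∈ T, IsCol K L) {x : X}
    (hx : ∃ L ∈ S, x ∈ base L) : ∃ L ∈ T, x ∈ base L := by
  obtain ⟨N, hN, hx⟩ := hx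
  cases h with
  | cut L f T hf he =>
    have hL := (hT L (by simp)).ne
    simp only [Multiset.mem_cons] at hN
    rcases hN with rfl | rfl | hN
    · rw [base_map hL] at hx
      exact ⟨L, by simp, (hf _ (base_mem hL)).2.1 hx⟩
    · rw [base_map hL] at hx
      exact ⟨L, by simp, hx.1⟩
    · exact ⟨N, by simp [hN], hx⟩
  | stack L M T he =>
    simp only [Multiset.mem_cons] at hN
    rcases hN with rfl | hN
    · rw [base_append (hT L (by simp)).ne] at hx
      exact ⟨L, by simp, hx⟩
    · exact ⟨N, by simp [hN], hx⟩

lemma IsCol.reverse {L : List (Set X)} (h : IsCol K L) : IsCol K L.reverse :=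
  ⟨by simpa using h.ne, by simpa using h.clopen, by simpa using h.nonempty,
    by simpa using h.eqv⟩

lemma Step.top_sub (h : Step K T S) (hT : ∀ L ∈ T, IsCol K L) {x : X}
    (hx : ∃ L ∈ S, x ∈ top L) : ∃ L ∈ T, x ∈ top L := by
  have := h.reverse.base_sub (x := x) (by simpa using fun L hL => (hT L hL).reverse)
    (by simpa [top] using hx)
  simpa [top] using this

/-- Stacking only selects one of the passages from top to base which `Link T` already allows. -/
lemma Step.link_sub (h : Step K T S) (hT : ∀ L ∈ T, IsCol K L) {x y : X}
    (hxy : Link S x y) : Link T x y := by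
  rcases hxy with ⟨N, hN, j, hj, hx, hy⟩ | ⟨hx, hy⟩
  · cases h with
    | cut L f T hf he =>
      simp only [Multiset.mem_cons] at hN
      rcases hN with rfl | rfl | hN
      · simp only [List.length_map] at hj
        simp only [List.getElem_map] at hx hy
        exact .inl ⟨L, by simp, j, hj, (hf _ (by simp)).2.1 hx, (hf _ (by simp)).2.1 hy⟩
      · simp only [List.length_map] at hj
        simp only [List.getElem_map] at hx hy
        exact .inl ⟨L, by simp, j, hj, hx.1, hy.1⟩
      · exact .inl ⟨N, by simp [hN], j, hj, hx, hy⟩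
    | stack L M T he =>
      simp only [Multiset.mem_cons] at hN
      rcases hN with rfl | hN
      · rcases lt_trichotomy (j + 1) L.length with h | h | h
        · rw [List.getElem_append_left (by omega)] at hx
          rw [List.getElem_append_left h] at hy
          exact .inl ⟨L, by simp, j, h, hx, hy⟩
        · have hLM : 0 < M.length := by simp at hj; omega
          rw [List.getElem_append_left (by omega)] at hx
          rw [List.getElem_append_right (by omega)] at hy
          refine .inr ⟨⟨L, by simp, ?_⟩, ⟨M, by simp, ?_⟩⟩
          · rw [top_eq_getElem (by omega)]
            simpa [← h] using hx
          · rw [base_eq_getElem hLM]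
            simpa [← h] using hy
        · rw [List.getElem_append_right (by omega)] at hx hy
          simp only [List.length_append] at hj
          refine .inl ⟨M, by simp, j - L.length, by omega, hx, ?_⟩
          have : j + 1 - L.length = j - L.length + 1 := by omega
          simpa [this] using hy
      · exact .inl ⟨N, by simp [hN], j, hj, hx, hy⟩
  · exact .inr ⟨h.top_sub hT hx, h.base_sub hT hy⟩

/-- A refinement has smaller base, smaller top and smaller relation `Link`. -/
lemma Ref.sub [OpensMeasurableSpace X] (h : Ref K T S) (hT : ∀ L ∈ T, IsCol K L) :
    (∀ x, (∃ L ∈ S, x ∈ base L) → ∃ L ∈ T, x ∈ base L) ∧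
    (∀ x, (∃ L ∈ S, x ∈ top L) → ∃ L ∈ T, x ∈ top L) ∧
    (∀ x y, Link S x y → Link T x y) := by
  induction h with
  | refl => exact ⟨fun _ h => h, fun _ h => h, fun _ _ h => h⟩
  | tail h' h ih =>
    have hc := Ref.cols h' hT
    exact ⟨fun x hx => ih.1 x (h.base_sub hc hx), fun x hx => ih.2.1 x (h.top_sub hc hx),
      fun x y hxy => ih.2.2 x y (h.link_sub hc hxy)⟩

end columns

/-! ### Measures of clopen sets -/

section measure

set_option linter.unusedSectionVars false

variable {X : Type*} [TopologicalSpace X] [MeasurableSpace X] [OpensMeasurableSpace X]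
  {K : Set (ProbabilityMeasure X)} {S T F H : Multiset (List (Set X))}

lemma pos_of_nonempty (hK : DynamicalSimplex K) {B : Set X} (hB : IsClopen B)
    (hn : B.Nonempty) {μ : ProbabilityMeasure X} (hμ : μ ∈ K) : 0 < μ B :=
  (hK.2.2.2.1 μ hμ).2 B hB.2 hn

lemma nonempty_of_pos {B : Set X} {μ : ProbabilityMeasure X} (h : 0 < μ B) : B.Nonempty := by
  rcases B.eq_empty_or_nonempty with rfl | h'
  · simp at h
  · exact h'

lemma measure_lt (hK : DynamicalSimplex K) {B C : Set X} (hB : IsClopen B) (hC : IsClopen C)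
    (h : C ⊆ B) (hn : (B \ C).Nonempty) {μ : ProbabilityMeasure X} (hμ : μ ∈ K) :
    μ C < μ B := by
  rw [← measure_add_sdiff hC h μ]
  exact lt_add_of_pos_right _ (pos_of_nonempty hK (hB.diff hC) hn hμ)

/-- The measures of pairwise disjoint sets add up to the measure of their union. -/
lemma sum_measure (s : Multiset (Set X)) (hs : ∀ B ∈ s, IsClopen B)
    (hc : ∀ x, cnt s x ≤ 1) (μ : ProbabilityMeasure X) :
    (s.map fun B => μ B).sum = μ {x | ∃ B ∈ s, x ∈ B} := by
  induction s using Multiset.induction_on with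
  | empty => simp
  | cons B s ih =>
    have hle : ∀ x, cnt s x ≤ 1 := fun x =>
      (cnt_mono (Multiset.le_cons_self s B) x).trans (hc x)
    have ih := ih (fun B' hB' => hs B' (by simp [hB'])) hle
    have hB := hs B (by simp)
    have hdiff : {x | ∃ B' ∈ s, x ∈ B'} = {x | ∃ B' ∈ B ::ₘ s, x ∈ B'} \ B := by
      ext x
      simp only [Set.mem_ofPred_eq, Multiset.mem_cons, exists_eq_or_imp, Set.mem_sdiff]
      constructor
      · intro h
        refine ⟨Or.inr h, fun hx => ?_⟩
        have h1 := hc x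
        rw [cnt_cons, if_pos hx] at h1
        have := cnt_pos.2 h
        omega
      · rintro ⟨h | h, h'⟩
        exacts [absurd h h', h]
    rw [Multiset.map_cons, Multiset.sum_cons, ih, hdiff]
    have hsub : B ⊆ {x | ∃ B' ∈ B ::ₘ s, x ∈ B'} := fun x hx => ⟨B, by simp, hx⟩
    exact measure_add_sdiff hB hsub μ

/-! ### Cutting a column -/

/-- A column can be cut along any clopen `C` of smaller measure; if `C` sits inside one of the
atoms then `C` itself is used there. -/
lemma cutCol (hK : DynamicalSimplex K) {L : List (Set X)} (hL : IsCol K L) {C : Set X}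
    (hC : IsClopen C) (hCn : C.Nonempty) (hlt : ∀ μ ∈ K, μ C < μ (base L)) :
    ∃ f : Set X → Set X,
      (∀ B ∈ L, IsClopen (f B) ∧ f B ⊆ B ∧ (f B).Nonempty ∧ (B \ f B).Nonempty) ∧
      (∀ B ∈ L, ∀ μ ∈ K, μ (f B) = μ C) ∧ ∀ B ∈ L, C ⊆ B → f B = C := by
  classical
  obtain ⟨ν, hν⟩ := hK.1
  have h : ∀ B : Set X, ∃ D : Set X, B ∈ L →
      IsClopen D ∧ D ⊆ B ∧ (∀ μ ∈ K, μ D = μ C) ∧ (C ⊆ B → D = C) := by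
    intro B
    by_cases hB : B ∈ L
    · by_cases hCB : C ⊆ B
      · exact ⟨C, fun _ => ⟨hC, hCB, fun _ _ => rfl, fun _ => rfl⟩⟩
      · obtain ⟨D, h1, h2, h3⟩ := hK.2.2.2.2.1 C B hC (hL.clopen B hB) (fun μ hμ => by
          rw [hL.eqv B hB _ (base_mem hL.ne) μ hμ]; exact hlt μ hμ)
        exact ⟨D, fun _ => ⟨h1, h2, h3, fun h => absurd h hCB⟩⟩
    · exact ⟨∅, fun h => absurd h hB⟩
  choose f hf using h
  refine ⟨f, fun B hB => ?_, fun B hB => (hf B hB).2.2.1, fun B hB => (hf B hB).2.2.2⟩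
  obtain ⟨h1, h2, h3, -⟩ := hf B hB
  refine ⟨h1, h2, ?_, ?_⟩
  · exact nonempty_of_pos (μ := ν) (by rw [h3 ν hν]; exact pos_of_nonempty hK hC hCn hν)
  · by_contra hne
    have : B = f B :=
      (Set.sdiff_eq_empty.1 (Set.not_nonempty_iff_eq_empty.1 hne)).antisymm h2
    have h4 := hlt ν hν
    rw [← h3 ν hν, ← this, hL.eqv B hB _ (base_mem hL.ne) ν hν] at h4
    exact lt_irrefl _ h4

/-- A column `M` whose base is `K`-equivalent to the union of the bases of `F` can be cut into
pieces which are stacked on the columns of `F`. -/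
lemma zip (hK : DynamicalSimplex K) (F : Multiset (List (Set X))) :
    ∀ M : List (Set X), IsCol K M → (∀ L ∈ F, IsCol K L) → F ≠ 0 →
    (∀ μ ∈ K, (F.map fun L => μ (base L)).sum = μ (base M)) →
    ∃ S, Ref K (M ::ₘ F) S ∧ S.map base = F.map base ∧
      ∀ L' ∈ S, ∃ L ∈ F, ∃ M', Piece M' M ∧ L' = L ++ M' := by
  induction F using Multiset.induction_on with
  | empty => intro M _ _ h; exact absurd rfl h
  | cons L F ih =>
    intro M hM hF _ hsum
    have hL := hF L (by simp)
    have hF' : ∀ N ∈ F, IsCol K N := fun N hN => hF N (by simp [hN])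
    by_cases h0 : F = 0
    · subst h0
      refine ⟨{L ++ M}, ?_, ?_, ?_⟩
      · rw [Multiset.cons_swap]
        refine (Step.stack L M 0 fun B hB B' hB' μ hμ => ?_).ref
        have := hsum μ hμ
        simp at this
        rw [hL.eqv B hB _ (base_mem hL.ne) μ hμ, this, hM.eqv _ (base_mem hM.ne) B' hB' μ hμ]
      · simp [base_append hL.ne]
      · intro L' hL'
        exact ⟨L, by simp, M, Piece.refl hM.nonempty, by simpa using hL'⟩
    · have hlt : ∀ μ ∈ K, μ (base L) < μ (base M) := by
        intro μ hμ
        rw [← hsum μ hμ, Multiset.map_cons, Multiset.sum_cons]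
        refine lt_add_of_pos_right _ ?_
        obtain ⟨N, hN⟩ := Multiset.exists_mem_of_ne_zero h0
        refine lt_of_lt_of_le ?_ (Multiset.single_le_sum (by simp) _
          (Multiset.mem_map_of_mem (fun L => μ (base L)) hN))
        exact pos_of_nonempty hK ((hF' N hN).clopen _ (base_mem (hF' N hN).ne))
          ((hF' N hN).nonempty _ (base_mem (hF' N hN).ne)) hμ
      have hbL := base_mem hL.ne
      obtain ⟨f, hf1, hf2, -⟩ := cutCol hK hM (hL.clopen _ hbL) (hL.nonempty _ hbL) hlt
      have hcut := Step.cut (K := K) M f (L ::ₘ F) hf1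
        (fun B hB B' hB' μ hμ => by rw [hf2 B hB μ hμ, hf2 B' hB' μ hμ])
      have hcols := hcut.cols (by
        intro N hN
        rcases Multiset.mem_cons.1 hN with rfl | hN
        exacts [hM, hF N hN])
      set M1 := M.map f
      set M2 := M.map (fun B => B \ f B) with hM2
      have hst := Step.stack (K := K) L M1 (M2 ::ₘ F) (by
        intro B hB B' hB' μ hμ
        obtain ⟨D, hD, rfl⟩ := List.mem_map.1 hB'
        rw [hf2 D hD μ hμ, hL.eqv B hB _ hbL μ hμ])
      have hM2c : IsCol K M2 := hcols M2 (by simp)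
      obtain ⟨S, hS1, hS2, hS3⟩ := ih M2 hM2c hF' h0 (by
        intro μ hμ
        have h1 := hsum μ hμ
        rw [hM2, base_map hM.ne]
        have hbM := base_mem hM.ne
        have h2 := measure_add_sdiff (hf1 _ hbM).1 (hf1 _ hbM).2.1 μ
        rw [← h1, Multiset.map_cons, Multiset.sum_cons, hf2 _ hbM μ hμ] at h2
        exact (add_left_cancel h2).symm)
      refine ⟨(L ++ M1) ::ₘ S, ?_, ?_, ?_⟩
      · refine hcut.ref.trans (Ref.trans ?_ (hS1.cons (L ++ M1)))
        have : M1 ::ₘ M2 ::ₘ L ::ₘ F = L ::ₘ M1 ::ₘ M2 ::ₘ F := by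
          rw [Multiset.cons_swap M2 L, Multiset.cons_swap M1 L]
        rw [this]
        exact hst.ref
      · simp [hS2, base_append hL.ne]
      · intro L' hL'
        rcases Multiset.mem_cons.1 hL' with rfl | hL'
        · exact ⟨L, by simp, M1,
            Piece.map (fun B hB => ⟨(hf1 B hB).2.1, (hf1 B hB).2.2.1⟩), rfl⟩
        · obtain ⟨N, hN, M', hM', rfl⟩ := hS3 L' hL'
          refine ⟨N, by simp [hN], M', hM'.trans (Piece.map fun B hB => ?_), rfl⟩
          exact ⟨Set.sdiff_subset, (hf1 B hB).2.2.2⟩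

open scoped Classical in
/-- Cutting the columns of `F` so that every base is either inside `C` (family `F₁`) or disjoint
from it (family `F₂`). Each column contributes at most one column to `F₂`, whence the last
clause. -/
lemma splitBase (hK : DynamicalSimplex K) {C : Set X} (hC : IsClopen C)
    (F : Multiset (List (Set X))) (hF : ∀ L ∈ F, IsCol K L) :
    ∃ F₁ F₂, Ref K F (F₁ + F₂) ∧
      (∀ x, cnt (F₁.map base) x = if x ∈ C then cnt (F.map base) x else 0) ∧
      (∀ x, cnt (F₂.map base) x = if x ∈ C then 0 else cnt (F.map base) x) ∧
      (∀ L' ∈ F₁, ∃ L ∈ F, Piece L' L) ∧ (∀ L' ∈ F₂, ∃ L ∈ F, Piece L' L) ∧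
      ∀ p : List (Set X) → Prop, (∀ L ∈ F, ∀ L', Piece L' L → p L' → p L) →
        F₂.countP p ≤ F.countP p := by
  induction F using Multiset.induction_on with
  | empty => exact ⟨0, 0, Ref.refl _, by simp, by simp, by simp, by simp, by simp⟩
  | cons L F ih =>
    obtain ⟨F₁, F₂, hR, h1, h2, h3, h4, h5⟩ := ih (fun N hN => hF N (by simp [hN]))
    have hL := hF L (by simp)
    have hbL := base_mem hL.ne
    have hrefl : Piece L L := Piece.refl hL.nonempty
    by_cases hin : base L ⊆ C
    · refine ⟨L ::ₘ F₁, F₂, by simpa using hR.cons L, ?_, ?_, ?_, ?_, ?_⟩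
      · intro x
        rw [Multiset.map_cons, Multiset.map_cons, cnt_cons, cnt_cons, h1]
        by_cases hx : x ∈ C
        · simp [hx]
        · have : x ∉ base L := fun h => hx (hin h)
          simp [hx, this]
      · intro x
        rw [Multiset.map_cons, cnt_cons, h2]
        by_cases hx : x ∈ C
        · simp [hx]
        · have : x ∉ base L := fun h => hx (hin h)
          simp [hx, this]
      · intro L' hL'
        rcases Multiset.mem_cons.1 hL' with rfl | hL'
        · exact ⟨L', by simp, hrefl⟩
        · obtain ⟨N, hN, h⟩ := h3 L' hL'; exact ⟨N, by simp [hN], h⟩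
      · intro L' hL'
        obtain ⟨N, hN, h⟩ := h4 L' hL'; exact ⟨N, by simp [hN], h⟩
      · intro p hp
        exact (h5 p fun N hN => hp N (by simp [hN])).trans
          (Multiset.countP_le_of_le _ (Multiset.le_cons_self _ _))
    by_cases hout : Disjoint (base L) C
    · have hd : ∀ x, x ∈ base L → x ∉ C := fun x hx hx' => Set.disjoint_left.1 hout hx hx'
      refine ⟨F₁, L ::ₘ F₂, by simpa using hR.cons L, ?_, ?_, ?_, ?_, ?_⟩
      · intro x
        rw [Multiset.map_cons, cnt_cons, h1]
        by_cases hx : x ∈ C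
        · have : x ∉ base L := fun h => hd x h hx
          simp [hx, this]
        · simp [hx]
      · intro x
        rw [Multiset.map_cons, Multiset.map_cons, cnt_cons, cnt_cons, h2]
        by_cases hx : x ∈ C
        · have : x ∉ base L := fun h => hd x h hx
          simp [hx, this]
        · simp [hx]
      · intro L' hL'
        obtain ⟨N, hN, h⟩ := h3 L' hL'; exact ⟨N, by simp [hN], h⟩
      · intro L' hL'
        rcases Multiset.mem_cons.1 hL' with rfl | hL'
        · exact ⟨L', by simp, hrefl⟩
        · obtain ⟨N, hN, h⟩ := h4 L' hL'; exact ⟨N, by simp [hN], h⟩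
      · intro p hp
        have := h5 p fun N hN => hp N (by simp [hN])
        rw [Multiset.countP_cons, Multiset.countP_cons]
        omega
    · have hCc : IsClopen (base L ∩ C) := (hL.clopen _ hbL).inter hC
      have hsub : base L ∩ C ⊆ base L := Set.inter_subset_left
      have hnd : (base L \ (base L ∩ C)).Nonempty := by
        rw [Set.sdiff_self_inter]
        exact Set.nonempty_of_not_subset hin
      obtain ⟨f, hf1, hf2, hf3⟩ := cutCol hK hL hCc (Set.not_disjoint_iff_nonempty_inter.1 hout)
        (fun μ hμ => measure_lt hK (hL.clopen _ hbL) hCc hsub hnd hμ)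
      have hfb := hf3 _ hbL hsub
      have hcut := Step.cut (K := K) L f F hf1
        (fun B hB B' hB' μ hμ => by rw [hf2 B hB μ hμ, hf2 B' hB' μ hμ])
      have hp1 : Piece (L.map f) L :=
        Piece.map (fun B hB => ⟨(hf1 B hB).2.1, (hf1 B hB).2.2.1⟩)
      have hp2 : Piece (L.map fun B => B \ f B) L :=
        Piece.map (fun B hB => ⟨Set.sdiff_subset, (hf1 B hB).2.2.2⟩)
      have hb1 : base (L.map f) = base L ∩ C := by rw [base_map hL.ne, hfb]
      have hb2 : base (L.map fun B => B \ f B) = base L \ C := by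
        rw [base_map hL.ne, hfb, Set.sdiff_self_inter]
      refine ⟨L.map f ::ₘ F₁, (L.map fun B => B \ f B) ::ₘ F₂, ?_, ?_, ?_, ?_, ?_, ?_⟩
      · refine hcut.ref.trans ?_
        rw [Multiset.cons_swap]
        have := (hR.cons (L.map f)).cons (L.map fun B => B \ f B)
        simpa using this
      · intro x
        rw [Multiset.map_cons, Multiset.map_cons, cnt_cons, cnt_cons, h1, hb1]
        by_cases hx : x ∈ C <;> simp [hx]
      · intro x
        rw [Multiset.map_cons, Multiset.map_cons, cnt_cons, cnt_cons, h2, hb2]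
        by_cases hx : x ∈ C <;> simp [hx]
      · intro L' hL'
        rcases Multiset.mem_cons.1 hL' with rfl | hL'
        · exact ⟨L, by simp, hp1⟩
        · obtain ⟨N, hN, h⟩ := h3 L' hL'; exact ⟨N, by simp [hN], h⟩
      · intro L' hL'
        rcases Multiset.mem_cons.1 hL' with rfl | hL'
        · exact ⟨L, by simp, hp2⟩
        · obtain ⟨N, hN, h⟩ := h4 L' hL'; exact ⟨N, by simp [hN], h⟩
      · intro p hp
        have := h5 p fun N hN => hp N (by simp [hN])
        rw [Multiset.countP_cons, Multiset.countP_cons]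
        by_cases hpL : p (L.map fun B => B \ f B)
        · have := hp L (by simp) _ hp2 hpL
          simp [hpL, this]; omega
        · simp only [hpL, if_false]; omega

lemma map_base_le_atoms (hF : ∀ L ∈ F, IsCol K L) : F.map base ≤ atoms F := by
  induction F using Multiset.induction_on with
  | empty => simp
  | cons L F ih =>
    rw [Multiset.map_cons, atoms_cons, ← Multiset.singleton_add]
    refine add_le_add ?_ (ih fun N hN => hF N (by simp [hN]))
    simpa using base_mem (hF L (by simp)).ne

lemma PV.base_cnt (h : PV K F) (x : X) : cnt (F.map base) x ≤ 1 :=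
  (cnt_mono (map_base_le_atoms h.cols) x).trans (h.cnt_le x)

lemma sum_base (h : PV K F) (μ : ProbabilityMeasure X) :
    (F.map fun L => μ (base L)).sum = μ {x | ∃ L ∈ F, x ∈ base L} := by
  have := sum_measure (F.map base) (by
    intro B hB
    obtain ⟨L, hL, rfl⟩ := Multiset.mem_map.1 hB
    exact (h.cols L hL).clopen _ (base_mem (h.cols L hL).ne)) h.base_cnt μ
  simpa [Multiset.map_map] using this

lemma isClopen_bases (h : ∀ L ∈ F, IsCol K L) : IsClopen {x | ∃ L ∈ F, x ∈ base L} := by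
  induction F using Multiset.induction_on with
  | empty => simp [isClopen_empty]
  | cons L F ih =>
    have h1 := (h L (by simp)).clopen _ (base_mem (h L (by simp)).ne)
    have h2 := ih fun N hN => h N (by simp [hN])
    convert h1.union h2 using 1
    ext x; simp

/-- The key use of goodness: a column `M` of smaller measure than the union of the bases of `F`
can be stacked, after cutting, on part of the columns of `F`. Here `F₁` is the part of `F` on top
of which `M` is put and `F₂` the remaining part. -/
lemma stackOn (hK : DynamicalSimplex K) {M : List (Set X)} (hM : IsCol K M) (hF : PV K F)
    (hlt : ∀ μ ∈ K, μ (base M) < μ {x | ∃ L ∈ F, x ∈ base L}) :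
    ∃ S F₂, Ref K (M ::ₘ F) (S + F₂) ∧
      (∀ x, (∃ L ∈ S + F₂, x ∈ base L) ↔ ∃ L ∈ F, x ∈ base L) ∧
      (∀ L' ∈ S, ∃ L ∈ F, ∃ L₁ M', Piece L₁ L ∧ Piece M' M ∧ L' = L₁ ++ M') ∧
      (∀ L' ∈ F₂, ∃ L ∈ F, Piece L' L) ∧
      ∀ (p : List (Set X) → Prop) [DecidablePred p],
        (∀ L ∈ F, ∀ L', Piece L' L → p L' → p L) → F₂.countP p ≤ F.countP p := by
  classical
  obtain ⟨ν, hν⟩ := hK.1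
  have hbM := base_mem hM.ne
  obtain ⟨C, hC, hCW, hCM⟩ := hK.2.2.2.2.1 _ _ (hM.clopen _ hbM) (isClopen_bases hF.cols) hlt
  obtain ⟨F₁, F₂, hR, h1, h2, h3, h4, h5⟩ := splitBase hK hC F hF.cols
  have hpv := hR.pv hF
  have hmem : ∀ (G : Multiset (List (Set X))) x,
      (∃ L ∈ G, x ∈ base L) ↔ 0 < cnt (G.map base) x := by
    intro G x; rw [cnt_pos]; simp
  have hF₁C : {x | ∃ L ∈ F₁, x ∈ base L} = C := by
    ext x
    rw [Set.mem_ofPred_eq, hmem, h1]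
    by_cases hx : x ∈ C
    · simp only [hx, if_true, iff_true]
      exact (hmem F x).1 (hCW hx)
    · simp [hx]
  have hF₁ : F₁ ≠ 0 := by
    rintro rfl
    have : C = ∅ := by rw [← hF₁C]; simp
    have h6 := hCM ν hν
    rw [this] at h6
    have := pos_of_nonempty hK (hM.clopen _ hbM) (hM.nonempty _ hbM) hν
    rw [← h6] at this
    simp at this
  obtain ⟨S, hS1, hS2, hS3⟩ := zip hK F₁ M hM hpv.left.cols hF₁ (fun μ hμ => by
    rw [sum_base hpv.left μ, hF₁C, hCM μ hμ])
  refine ⟨S, F₂, (hR.cons M).trans ?_, ?_, ?_, h4, ?_⟩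
  · have := hS1.add_right F₂
    simpa using this
  · intro x
    rw [hmem, hmem, Multiset.map_add, hS2, cnt_add, h1, h2]
    by_cases hx : x ∈ C <;> simp [hx]
  · intro L' hL'
    obtain ⟨L₁, hL₁, M', hM', rfl⟩ := hS3 L' hL'
    obtain ⟨L, hL, hp⟩ := h3 L₁ hL₁
    exact ⟨L, hL, L₁, M', hp, hM', rfl⟩
  · intro p _ hp
    convert h5 p hp

/-- All columns of `H` can be stacked on the columns of `F`, provided each is thin enough. -/
lemma absorb (hK : DynamicalSimplex K) (W : Set X) (H : Multiset (List (Set X))) :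
    ∀ F, PV K (F + H) → {x | ∃ L ∈ F, x ∈ base L} = W →
    (∀ M ∈ H, ∀ μ ∈ K, μ (base M) < μ W) →
    ∃ S, Ref K (F + H) S ∧ {x | ∃ L ∈ S, x ∈ base L} = W := by
  induction H using Multiset.induction_on with
  | empty => intro F _ h _; exact ⟨F, by simpa using Ref.refl F, h⟩
  | cons M H ih =>
    intro F hpv hW hlt
    have hM : IsCol K M := hpv.cols M (by simp)
    obtain ⟨S, F₂, hR, hb, -⟩ := stackOn hK hM hpv.left (fun μ hμ => by
      rw [hW]; exact hlt M (by simp) μ hμ)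
    have hR' := hR.add_right H
    have he : F + M ::ₘ H = M ::ₘ F + H := by simp
    rw [he] at hpv ⊢
    obtain ⟨S', h1, h2⟩ := ih (S + F₂) (hR'.pv hpv) (by
      rw [← hW]; ext x; exact hb x) (fun N hN => hlt N (by simp [hN]))
    exact ⟨S', hR'.trans h1, h2⟩

end measure

/-! ### Compatibility with clopen sets -/

/-- Every atom of `T` is contained in `U` or disjoint from it. -/
def Compat {X : Type*} (T : Multiset (List (Set X))) (U : Set X) : Prop :=
  ∀ B ∈ atoms T, B ⊆ U ∨ Disjoint B U

section compat

set_option linter.unusedSectionVars false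

variable {X : Type*} [TopologicalSpace X] [MeasurableSpace X] [OpensMeasurableSpace X]
  {K : Set (ProbabilityMeasure X)} {S T F H : Multiset (List (Set X))} {U V : Set X}

lemma compat_mono {B B' : Set X} (h : B ⊆ B') (hB : B' ⊆ U ∨ Disjoint B' U) :
    B ⊆ U ∨ Disjoint B U :=
  hB.imp h.trans (fun h' => h'.mono_left h)

lemma Compat.ref (h : Compat T U) (hR : Ref K T S) : Compat S U := by
  intro B hB
  obtain ⟨B', hB', hs⟩ := hR.atom_sub B hB
  exact compat_mono hs (h B' hB')

open scoped Classical in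
/-- By induction on the number of levels which meet both `U` and its complement: cutting the column
along `B ∩ U` repairs the level `B`. -/
lemma compatCol (hK : DynamicalSimplex K) (hU : IsClopen U) (n : ℕ) :
    ∀ L : List (Set X), IsCol K L →
    L.countP (fun B => ¬ (B ⊆ U ∨ Disjoint B U)) ≤ n →
    ∃ S, Ref K {L} S ∧ Compat S U := by
  induction n with
  | zero =>
    intro L hL h
    refine ⟨{L}, Ref.refl _, fun B hB => ?_⟩
    have hB' : B ∈ L := by simpa [mem_atoms] using hB
    have h0 : L.countP (fun B => ¬ (B ⊆ U ∨ Disjoint B U)) = 0 := by omega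
    have := List.countP_eq_zero.1 h0 B hB'
    simpa [or_iff_not_imp_left] using this
  | succ n ih =>
    intro L hL h
    by_cases hall : ∀ B ∈ L, B ⊆ U ∨ Disjoint B U
    · refine ⟨{L}, Ref.refl _, fun B hB => hall B ?_⟩
      simpa [mem_atoms] using hB
    push Not at hall
    obtain ⟨B, hB, hin, hout⟩ := hall
    have hc : IsClopen (B ∩ U) := (hL.clopen B hB).inter hU
    have hsub : B ∩ U ⊆ B := Set.inter_subset_left
    obtain ⟨f, hf1, hf2, hf3⟩ := cutCol hK hL hc (Set.not_disjoint_iff_nonempty_inter.1 hout)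
      (fun μ hμ => by
        rw [hL.eqv _ (base_mem hL.ne) B hB μ hμ]
        refine measure_lt hK (hL.clopen B hB) hc hsub ?_ hμ
        rw [Set.sdiff_self_inter]
        exact Set.nonempty_of_not_subset hin)
    have hfB := hf3 B hB hsub
    have hcut := Step.cut (K := K) L f 0 hf1
      (fun B hB B' hB' μ hμ => by rw [hf2 B hB μ hμ, hf2 B' hB' μ hμ])
    have hcols := hcut.cols (by simpa using hL)
    -- a levelwise shrinking which repairs the level `B` lowers the number of bad levels
    have key : ∀ e : Set X → Set X, (∀ B ∈ L, e B ⊆ B) → (e B ⊆ U ∨ Disjoint (e B) U) →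
        (L.map e).countP (fun B => ¬ (B ⊆ U ∨ Disjoint B U)) ≤ n := by
      intro e he heB
      obtain ⟨l, r, rfl⟩ := List.append_of_mem hB
      have hmono : ∀ l' : List (Set X), (∀ D ∈ l', e D ⊆ D) →
          (l'.map e).countP (fun B => ¬ (B ⊆ U ∨ Disjoint B U)) ≤
            l'.countP (fun B => ¬ (B ⊆ U ∨ Disjoint B U)) := by
        intro l' hl'
        rw [List.countP_map]
        refine List.countP_mono_left fun D hD hbad => ?_
        simp only [Function.comp, decide_eq_true_eq] at hbad ⊢
        exact fun h => hbad (compat_mono (hl' D hD) h)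
      have h1 := hmono l (fun D hD => he D (by simp [hD]))
      have h2 := hmono r (fun D hD => he D (by simp [hD]))
      rw [List.countP_append, List.countP_cons_of_pos (by simp [hin, hout])] at h
      rw [List.map_append, List.map_cons, List.countP_append,
        List.countP_cons_of_neg (by simpa [or_iff_not_imp_left] using heB)]
      omega
    obtain ⟨S₁, hS₁, hc₁⟩ := ih _ (hcols (L.map f) (by simp))
      (key f (fun B hB => (hf1 B hB).2.1) (by rw [hfB]; exact .inl Set.inter_subset_right))
    obtain ⟨S₂, hS₂, hc₂⟩ := ih _ (hcols (L.map fun B => B \ f B) (by simp))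
      (key (fun B => B \ f B) (fun B _ => Set.sdiff_subset) (by
        right
        simp only [hfB, Set.sdiff_self_inter]
        exact Set.disjoint_sdiff_left))
    refine ⟨S₁ + S₂, hcut.ref.trans ?_, ?_⟩
    · simpa using hS₁.add hS₂
    · intro D hD
      rw [atoms_add, Multiset.mem_add] at hD
      exact hD.elim (hc₁ D) (hc₂ D)

lemma exists_compat (hK : DynamicalSimplex K) (hU : IsClopen U) (hT : ∀ L ∈ T, IsCol K L) :
    ∃ S, Ref K T S ∧ Compat S U := by
  classical
  induction T using Multiset.induction_on with
  | empty => exact ⟨0, Ref.refl _, by simp [Compat]⟩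
  | cons L T ih =>
    obtain ⟨S, hS, hc⟩ := ih fun N hN => hT N (by simp [hN])
    obtain ⟨S', hS', hc'⟩ := compatCol hK hU _ L (hT L (by simp)) le_rfl
    refine ⟨S' + S, by simpa using hS'.add hS, ?_⟩
    intro D hD
    rw [atoms_add, Multiset.mem_add] at hD
    exact hD.elim (hc' D) (hc D)

lemma exists_compat_finset (hK : DynamicalSimplex K) (𝒰 : Finset (Set X))
    (h𝒰 : ∀ U ∈ 𝒰, IsClopen U) (hT : ∀ L ∈ T, IsCol K L) :
    ∃ S, Ref K T S ∧ ∀ U ∈ 𝒰, Compat S U := by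
  classical
  induction 𝒰 using Finset.induction_on with
  | empty => exact ⟨T, Ref.refl _, by simp⟩
  | insert U 𝒰 _ ih =>
    obtain ⟨S, hS, hc⟩ := ih fun V hV => h𝒰 V (by simp [hV])
    obtain ⟨S', hS', hc'⟩ := exists_compat hK (h𝒰 U (by simp)) (hS.cols hT)
    refine ⟨S', hS.trans hS', fun V hV => ?_⟩
    rcases Finset.mem_insert.1 hV with rfl | hV
    exacts [hc', (hc V hV).ref hS']

end compat

/-! ### Concentrating the base and the top -/

section concentrate

set_option linter.unusedSectionVars false

variable {X : Type*} [TopologicalSpace X] [CompactSpace X]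
  [TopologicalSpace.MetrizableSpace X] [TotallyDisconnectedSpace X]
  [MeasurableSpace X] [BorelSpace X]
  {K : Set (ProbabilityMeasure X)} {S T F H : Multiset (List (Set X))} {U V : Set X}

lemma continuous_measure_clopen (hU : IsClopen U) :
    Continuous fun μ : ProbabilityMeasure X => μ U := by
  rw [continuous_iff_continuousAt]
  intro μ
  exact ProbabilityMeasure.tendsto_measure_of_null_frontier_of_tendsto Filter.tendsto_id
    (by simp [hU.frontier_eq])

/-- A sufficiently fine clopen set has uniformly (over `K`) smaller measure than `W`. -/
lemma exists_small (hK : DynamicalSimplex K) {W : Set X} (hW : IsClopen W) (hn : W.Nonempty) :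
    ∃ 𝒰 : Finset (Set X), (∀ U ∈ 𝒰, IsClopen U) ∧
      ∀ B : Set X, B.Nonempty → (∀ U ∈ 𝒰, B ⊆ U ∨ Disjoint B U) → ∀ μ ∈ K, μ B < μ W := by
  classical
  have hx : ∀ x : X, ∃ U : Set X, IsClopen U ∧ x ∈ U ∧ ∀ μ ∈ K, μ U < μ W := by
    intro x
    have hdir := hK.2.1.elim_directed_cover
      (fun U : {U : Set X // IsClopen U ∧ x ∈ U} => {μ : ProbabilityMeasure X | μ U.1 < μ W})
      (hι := ⟨⟨Set.univ, isClopen_univ, trivial⟩⟩)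
      (fun U => isOpen_lt (continuous_measure_clopen U.2.1) (continuous_measure_clopen hW))
      (by
        intro μ hμ
        have h0 : (μ : Measure X) {x} < (μ : Measure X) W := by
          have h1 := (hK.2.2.2.1 μ hμ).1 x
          have h2 := pos_of_nonempty hK hW hn hμ
          rw [← ProbabilityMeasure.ennreal_coeFn_eq_coeFn_toMeasure,
            ← ProbabilityMeasure.ennreal_coeFn_eq_coeFn_toMeasure, h1]
          exact_mod_cast h2
        obtain ⟨O, hO1, hO2, hO3⟩ := Set.exists_isOpen_lt_of_lt _ _ h0
        obtain ⟨U, hU, hxU, hUO⟩ := compact_exists_isClopen_in_isOpen hO2 (hO1 rfl)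
        refine Set.mem_iUnion.2 ⟨⟨U, hU, hxU⟩, ?_⟩
        have h3 := (measure_mono hUO).trans_lt hO3
        rw [← ProbabilityMeasure.ennreal_coeFn_eq_coeFn_toMeasure,
            ← ProbabilityMeasure.ennreal_coeFn_eq_coeFn_toMeasure] at h3
        exact_mod_cast h3)
      (by
        intro U V
        refine ⟨⟨U.1 ∩ V.1, U.2.1.inter V.2.1, U.2.2, V.2.2⟩, ?_, ?_⟩
        · intro μ hμ
          exact lt_of_le_of_lt (ProbabilityMeasure.apply_mono μ Set.inter_subset_left) hμ
        · intro μ hμ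
          exact lt_of_le_of_lt (ProbabilityMeasure.apply_mono μ Set.inter_subset_right) hμ)
    obtain ⟨U, hU⟩ := hdir
    exact ⟨U.1, U.2.1, U.2.2, fun μ hμ => hU hμ⟩
  choose U hU1 hU2 hU3 using hx
  obtain ⟨t, ht⟩ := isCompact_univ.elim_finite_subcover U (fun x => (hU1 x).2)
    (fun x _ => Set.mem_iUnion.2 ⟨x, hU2 x⟩)
  refine ⟨t.image U, ?_, ?_⟩
  · intro V hV
    obtain ⟨x, -, rfl⟩ := Finset.mem_image.1 hV
    exact hU1 x
  · rintro B ⟨y, hy⟩ hB μ hμ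
    obtain ⟨x, hx⟩ := Set.mem_iUnion.1 (ht (Set.mem_univ y))
    obtain ⟨hxt, hyx⟩ := Set.mem_iUnion.1 hx
    rcases hB (U x) (Finset.mem_image_of_mem _ hxt) with h | h
    · exact lt_of_le_of_lt (ProbabilityMeasure.apply_mono μ h) (hU3 x μ hμ)
    · exact absurd hyx (Set.disjoint_left.1 h hy)

lemma atoms_reverse (T : Multiset (List (Set X))) : atoms (T.map List.reverse) = atoms T := by
  simp [atoms, Multiset.bind_map]

lemma PV.reverse (h : PV K T) : PV K (T.map List.reverse) :=
  ⟨by simpa using fun L hL => (h.cols L hL).reverse, fun x => by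
    rw [atoms_reverse]; exact h.cnt_le x⟩

/-- All columns of `H` can be stacked on one column `L`. -/
lemma absorbAll (hK : DynamicalSimplex K) {L : List (Set X)} (h : PV K (L ::ₘ H)) :
    ∃ S, Ref K (L ::ₘ H) S ∧ {x | ∃ L ∈ S, x ∈ base L} = base L := by
  have hL := h.cols L (by simp)
  have hb := base_mem hL.ne
  obtain ⟨𝒰, h𝒰, hsm⟩ := exists_small hK (hL.clopen _ hb) (hL.nonempty _ hb)
  obtain ⟨H', hH', hc⟩ := exists_compat_finset hK 𝒰 h𝒰 (T := H)
    (fun N hN => h.cols N (by simp [hN]))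
  have hR := hH'.cons L
  have hpv := hR.pv h
  obtain ⟨S, h1, h2⟩ := absorb hK (base L) H' {L} (by simpa using hpv) (by simp) (by
    intro M hM μ hμ
    have hMc := hpv.cols M (by simp [hM])
    have hbM := base_mem hMc.ne
    exact hsm _ (hMc.nonempty _ hbM)
      (fun U hU => hc U hU _ (mem_atoms.2 ⟨M, hM, hbM⟩)) μ hμ)
  exact ⟨S, hR.trans (by simpa using h1), h2⟩

/-- Any family of columns can be refined so that the new base and top lie in the base and the top
of one prescribed column. -/
lemma concentrate (hK : DynamicalSimplex K) (hT : PV K T) {L₀ : List (Set X)} (hL₀ : L₀ ∈ T) :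
    ∃ S, Ref K T S ∧ (∀ L ∈ S, base L ⊆ base L₀) ∧ ∀ L ∈ S, top L ⊆ top L₀ := by
  obtain ⟨T', rfl⟩ := Multiset.exists_cons_of_mem hL₀
  have hL := hT.cols L₀ hL₀
  have hb := base_mem hL.ne
  obtain ⟨ν, hν⟩ := hK.1
  obtain ⟨x, hx⟩ := hL.nonempty _ hb
  -- measures in `K` have no atoms, so the base of `L₀` has a second point
  obtain ⟨y, hy, hyx⟩ : ∃ y ∈ base L₀, y ≠ x := by
    by_contra! h
    have h1 := ProbabilityMeasure.apply_mono ν (s₁ := base L₀) (s₂ := {x}) (fun y hy => h y hy)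
    rw [(hK.2.2.2.1 ν hν).1 x] at h1
    exact absurd (pos_of_nonempty hK (hL.clopen _ hb) ⟨x, hx⟩ hν) (not_lt.2 h1)
  obtain ⟨C', hC', hxC, hCy⟩ := compact_exists_isClopen_in_isOpen
    (isOpen_compl_singleton (x := y)) (show x ∈ ({y}ᶜ : Set X) from fun h => hyx h.symm)
  have hC : IsClopen (base L₀ ∩ C') := (hL.clopen _ hb).inter hC'
  obtain ⟨f, hf1, hf2, -⟩ := cutCol hK hL hC ⟨x, hx, hxC⟩ (fun μ hμ =>
    measure_lt hK (hL.clopen _ hb) hC Set.inter_subset_left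
      ⟨y, hy, fun h => hCy h.2 rfl⟩ hμ)
  have hcut := Step.cut (K := K) L₀ f T' hf1
    (fun B hB B' hB' μ hμ => by rw [hf2 B hB μ hμ, hf2 B' hB' μ hμ])
  have hb1 : base (L₀.map f) ⊆ base L₀ := by
    rw [base_map hL.ne]; exact (hf1 _ hb).2.1
  have hb2 : base (L₀.map fun B => B \ f B) ⊆ base L₀ := by
    rw [base_map hL.ne]; exact Set.sdiff_subset
  have ht2 : top (L₀.map fun B => B \ f B) ⊆ top L₀ := by
    rw [top_map hL.ne]; exact Set.sdiff_subset
  set L₁ := L₀.map f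
  set L₂ := L₀.map fun B => B \ f B
  have hR0 := hcut.ref
  rw [Multiset.cons_swap] at hR0
  have hpv1 := hR0.pv hT
  have hpv1' : PV K ({L₂} + L₁ ::ₘ T') := by rw [Multiset.singleton_add]; exact hpv1
  obtain ⟨S₁, hS₁, hS₁b⟩ := absorbAll hK hpv1'.right
  have hR1 := hS₁.cons L₂
  have hpv2 := hR1.pv hpv1
  have hrev := hpv2.reverse
  rw [Multiset.map_cons] at hrev
  obtain ⟨S₂, hS₂, hS₂b⟩ := absorbAll hK hrev
  have hR2 := hS₂.reverse
  have hid : ∀ Q : Multiset (List (Set X)), (Q.map List.reverse).map List.reverse = Q := by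
    intro Q; simp [Multiset.map_map]
  rw [← Multiset.map_cons, hid] at hR2
  refine ⟨S₂.map List.reverse, hR0.trans (hR1.trans hR2), ?_, ?_⟩
  · intro L hL' z hz
    obtain ⟨N, hN, hzN⟩ := (hR2.sub hpv2.cols).1 z ⟨L, hL', hz⟩
    rcases Multiset.mem_cons.1 hN with rfl | hN
    · exact hb2 hzN
    · have : z ∈ {x | ∃ L ∈ S₁, x ∈ base L} := ⟨N, hN, hzN⟩
      rw [hS₁b] at this
      exact hb1 this
  · intro L hL' z hz
    obtain ⟨N, hN, rfl⟩ := Multiset.mem_map.1 hL'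
    have : z ∈ {x | ∃ L ∈ S₂, x ∈ base L} := ⟨N, hN, by simpa [top] using hz⟩
    rw [hS₂b] at this
    exact ht2 this

end concentrate

/-! ### Balancing two equivalent clopen sets -/

section balance

set_option linter.unusedSectionVars false

open scoped Classical in
/-- Number of atoms of `L` inside `U` minus number of atoms inside `V`. -/
noncomputable def wt {X : Type*} (U V : Set X) (L : List (Set X)) : ℤ :=
  (L.countP (fun B => B ⊆ U) : ℤ) - (L.countP (fun B => B ⊆ V) : ℤ)

variable {X : Type*} [TopologicalSpace X] [MeasurableSpace X] [OpensMeasurableSpace X]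
  {K : Set (ProbabilityMeasure X)} {S T F H : Multiset (List (Set X))} {U V : Set X}

lemma wt_append (L M : List (Set X)) : wt U V (L ++ M) = wt U V L + wt U V M := by
  simp [wt, List.countP_append]; ring

lemma wt_swap (L : List (Set X)) : wt V U L = - wt U V L := by
  simp [wt]

open scoped Classical in
lemma countP_piece {L' L : List (Set X)} (h : Piece L' L)
    (hc : ∀ B ∈ L, B ⊆ U ∨ Disjoint B U) :
    L'.countP (fun B => B ⊆ U) = L.countP (fun B => B ⊆ U) := by
  unfold Piece at h
  induction h with
  | nil => rfl
  | @cons B' B l' l hB _ ih =>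
    rw [List.countP_cons, List.countP_cons, ih (fun D hD => hc D (by simp [hD]))]
    have : B' ⊆ U ↔ B ⊆ U := by
      refine ⟨fun h => ?_, fun h => hB.1.trans h⟩
      rcases hc B (by simp) with h' | h'
      · exact h'
      · obtain ⟨x, hx⟩ := hB.2
        exact absurd (h hx) (Set.disjoint_left.1 h' (hB.1 hx))
    simp [this]

lemma wt_piece {L' L : List (Set X)} (h : Piece L' L)
    (hU : ∀ B ∈ L, B ⊆ U ∨ Disjoint B U) (hV : ∀ B ∈ L, B ⊆ V ∨ Disjoint B V) :
    wt U V L' = wt U V L := by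
  rw [wt, wt, countP_piece h hU, countP_piece h hV]

open scoped Classical in
/-- The measure of a clopen set computed by counting its atoms in each column. -/
lemma measure_eq_sum (hT : PV K T) (hcov : ∀ x, cnt (atoms T) x = 1) (hU : Compat T U)
    {μ : ProbabilityMeasure X} (hμ : μ ∈ K) :
    (T.map fun L => ((L.countP (fun B => B ⊆ U) : ℕ) : ℝ) * (μ (base L) : ℝ)).sum = μ U := by
  have h1 := sum_measure ((atoms T).filter (fun B => B ⊆ U)) (by
    intro B hB
    obtain ⟨L, hL, hBL⟩ := mem_atoms.1 (Multiset.mem_filter.1 hB).1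
    exact (hT.cols L hL).clopen B hBL)
    (fun x => (cnt_mono (Multiset.filter_le _ _) x).trans (hT.cnt_le x)) μ
  have h2 : {x | ∃ B ∈ (atoms T).filter (fun B => B ⊆ U), x ∈ B} = U := by
    ext x
    constructor
    · rintro ⟨B, hB, hx⟩
      exact (Multiset.mem_filter.1 hB).2 hx
    · intro hx
      obtain ⟨B, hB, hxB⟩ := cnt_pos.1 (by rw [hcov x]; exact one_pos)
      refine ⟨B, Multiset.mem_filter.2 ⟨hB, ?_⟩, hxB⟩
      exact (hU B hB).resolve_right fun h => Set.disjoint_left.1 h hxB hx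
  rw [h2] at h1
  rw [← h1]
  have hcols := hT.cols
  clear h1 h2 hcov hU hT
  induction T using Multiset.induction_on with
  | empty => simp
  | cons L T ih =>
    have ih := ih fun N hN => hcols N (by simp [hN])
    rw [Multiset.map_cons, Multiset.sum_cons, ih, atoms_cons, Multiset.filter_add,
      Multiset.map_add, Multiset.sum_add, NNReal.coe_add]
    congr 1
    have hL := hcols L (by simp)
    have hgen : ∀ l : List (Set X), (∀ B ∈ l, μ B = μ (base L)) →
        ((l.countP (fun B => B ⊆ U) : ℕ) : ℝ) * (μ (base L) : ℝ) =
        (((Multiset.filter (fun B => B ⊆ U) (l : Multiset (Set X))).map fun B => μ B).sum :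
          NNReal) := by
      intro l hl
      induction l with
      | nil => simp
      | cons B l ihl =>
        have ihl := ihl fun D hD => hl D (by simp [hD])
        rw [← Multiset.cons_coe]
        by_cases hB : B ⊆ U
        · rw [Multiset.filter_cons_of_pos (p := fun B => B ⊆ U) _ hB, List.countP_cons_of_pos (by simpa using hB),
            Multiset.map_cons, Multiset.sum_cons, hl B (by simp), NNReal.coe_add, Nat.cast_add,
            Nat.cast_one, ← ihl]
          ring
        · rw [Multiset.filter_cons_of_neg (p := fun B => B ⊆ U) _ hB, List.countP_cons_of_neg (by simpa using hB), ihl]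
    exact hgen L fun B hB => hL.eqv B hB _ (base_mem hL.ne) μ hμ

/-- If some column has the largest possible imbalance `N`, its pieces can be stacked on columns
of negative weight, which lowers the number of columns of imbalance `N`. -/
lemma balanceStep (hK : DynamicalSimplex K) (hT : PV K T) (hcov : ∀ x, cnt (atoms T) x = 1)
    (hU : Compat T U) (hV : Compat T V) (hUV : ∀ μ ∈ K, μ U = μ V) {N : ℤ} (hN : 0 < N)
    (hle : ∀ L ∈ T, |wt U V L| ≤ N) {L₀ : List (Set X)} (hL₀ : L₀ ∈ T)
    (hw : wt U V L₀ = N) :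
    ∃ S, Ref K T S ∧ (∀ L ∈ S, |wt U V L| ≤ N) ∧
      S.countP (fun L => |wt U V L| = N) < T.countP (fun L => |wt U V L| = N) := by
  classical
  obtain ⟨T', rfl⟩ := Multiset.exists_cons_of_mem hL₀
  set J := T'.filter (fun L => wt U V L < 0) with hJ
  set P := T'.filter (fun L => ¬ wt U V L < 0) with hP
  have hJP : J + P = T' := Multiset.filter_add_not _ _
  have hcolL := hT.cols L₀ hL₀
  have hJmem : ∀ L ∈ J, L ∈ T' ∧ wt U V L < 0 := fun L hL => Multiset.mem_filter.1 hL
  have hPmem : ∀ L ∈ P, L ∈ T' ∧ ¬ wt U V L < 0 := fun L hL => Multiset.mem_filter.1 hL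
  have hpvT' : PV K (J + P) := by
    rw [hJP]
    rw [← Multiset.singleton_add] at hT
    exact hT.right
  have hpvJ := hpvT'.left
  have hpos : ∀ L ∈ L₀ ::ₘ T', ∀ μ ∈ K, (0 : ℝ) < μ (base L) := by
    intro L hL μ hμ
    have hc := hT.cols L hL
    exact_mod_cast pos_of_nonempty hK (hc.clopen _ (base_mem hc.ne))
      (hc.nonempty _ (base_mem hc.ne)) hμ
  -- the defect `N * (μ(bases of J) - μ(base L₀))` is a sum of nonnegative terms
  have hslack : ∀ μ ∈ K, (N : ℝ) * (J.map fun L => (μ (base L) : ℝ)).sum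
      - N * (μ (base L₀) : ℝ) =
      (T'.map fun L => (if wt U V L < 0 then (N : ℝ) + wt U V L else wt U V L)
        * (μ (base L) : ℝ)).sum := by
    intro μ hμ
    have h1 := measure_eq_sum hT hcov hU hμ
    have h2 := measure_eq_sum hT hcov hV hμ
    have h3 : ((L₀ ::ₘ T').map fun L => (wt U V L : ℝ) * (μ (base L) : ℝ)).sum = 0 := by
      have : (fun L => (wt U V L : ℝ) * (μ (base L) : ℝ)) = fun L =>
          ((L.countP (fun B => B ⊆ U) : ℕ) : ℝ) * (μ (base L) : ℝ) -
          ((L.countP (fun B => B ⊆ V) : ℕ) : ℝ) * (μ (base L) : ℝ) := by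
        funext L; simp only [wt]; push_cast; ring
      rw [this, Multiset.sum_map_sub, h1, h2, hUV μ hμ, sub_self]
    rw [Multiset.map_cons, Multiset.sum_cons, hw] at h3
    have h4 : (N : ℝ) * (J.map fun L => (μ (base L) : ℝ)).sum +
        (T'.map fun L => (wt U V L : ℝ) * (μ (base L) : ℝ)).sum =
        (T'.map fun L => (if wt U V L < 0 then (N : ℝ) + wt U V L else wt U V L)
        * (μ (base L) : ℝ)).sum := by
      rw [hJ]
      clear_value J P
      clear * -
      induction T' using Multiset.induction_on with
      | empty => simp
      | cons L T' ih =>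
        by_cases h : wt U V L < 0
        · simp only [Multiset.filter_cons_of_pos (p := fun L => wt U V L < 0) _ h,
            Multiset.map_cons, Multiset.sum_cons, h, if_true]
          linarith
        · simp only [Multiset.filter_cons_of_neg (p := fun L => wt U V L < 0) _ h,
            Multiset.map_cons, Multiset.sum_cons, h, if_false]
          linarith
    linarith
  have hsumJ : ∀ μ : ProbabilityMeasure X, (J.map fun L => (μ (base L) : ℝ)).sum =
      ((J.map fun L => μ (base L)).sum : NNReal) := by
    intro μ
    have := map_multiset_sum NNReal.toRealHom (J.map fun L => μ (base L))
    rw [Multiset.map_map] at this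
    exact this.symm
  have hNR : (0 : ℝ) < N := by exact_mod_cast hN
  have hcoef : ∀ L ∈ T', (0 : ℝ) ≤ if wt U V L < 0 then (N : ℝ) + wt U V L else wt U V L := by
    intro L hL
    have := abs_le.1 (hle L (by simp [hL]))
    split_ifs with h
    · have : 0 ≤ N + wt U V L := by omega
      exact_mod_cast this
    · exact_mod_cast not_lt.1 h
  have hmain : ∃ S F₂, Ref K (L₀ ::ₘ J) (S + F₂) ∧
      (∀ L' ∈ S, ∃ L ∈ J, ∃ L₁ M', Piece L₁ L ∧ Piece M' L₀ ∧ L' = L₁ ++ M') ∧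
      (∀ L' ∈ F₂, ∃ L ∈ J, Piece L' L) ∧
      F₂.countP (fun L => |wt U V L| = N) ≤ J.countP (fun L => |wt U V L| = N) := by
    by_cases hzero : ∀ L ∈ T',
        (if wt U V L < 0 then (N : ℝ) + wt U V L else wt U V L) = 0
    -- all defects vanish: the base of `L₀` has exactly the measure of the bases of `J`
    · have heq : ∀ μ ∈ K, (J.map fun L => μ (base L)).sum = μ (base L₀) := by
        intro μ hμ
        have h1 := hslack μ hμ
        have h2 : (T'.map fun L => (if wt U V L < 0 then (N : ℝ) + wt U V L else wt U V L)
            * (μ (base L) : ℝ)).sum = 0 := by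
          apply Multiset.sum_eq_zero
          intro r hr
          obtain ⟨L, hL, rfl⟩ := Multiset.mem_map.1 hr
          rw [hzero L hL, zero_mul]
        rw [h2, hsumJ] at h1
        have h3 : (((J.map fun L => μ (base L)).sum : NNReal) : ℝ) = (μ (base L₀) : ℝ) := by
          have : (N : ℝ) * (((J.map fun L => μ (base L)).sum : NNReal) : ℝ) =
            N * (μ (base L₀) : ℝ) := by linarith
          exact mul_left_cancel₀ hNR.ne' this
        exact_mod_cast h3
      have hJ0 : J ≠ 0 := by
        intro h0
        obtain ⟨ν, hν⟩ := hK.1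
        have h1 := heq ν hν
        rw [h0] at h1
        have h2 := hpos L₀ hL₀ ν hν
        rw [← h1] at h2
        simp at h2
      obtain ⟨S, h1, -, h3⟩ := zip hK J L₀ hcolL hpvJ.cols hJ0 heq
      refine ⟨S, 0, by simpa using h1, ?_, by simp, by simp⟩
      intro L' hL'
      obtain ⟨L, hL, M', hM', rfl⟩ := h3 L' hL'
      exact ⟨L, hL, L, M', Piece.refl (hpvJ.cols L hL).nonempty, hM', rfl⟩
    · push Not at hzero
      obtain ⟨L₂, hL₂, hne⟩ := hzero
      have hlt : ∀ μ ∈ K, μ (base L₀) < μ {x | ∃ L ∈ J, x ∈ base L} := by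
        intro μ hμ
        rw [← sum_base hpvJ μ]
        have h1 := hslack μ hμ
        have h2 : 0 < (T'.map fun L => (if wt U V L < 0 then (N : ℝ) + wt U V L else wt U V L)
            * (μ (base L) : ℝ)).sum := by
          refine lt_of_lt_of_le ?_ (Multiset.single_le_sum ?_ _ (Multiset.mem_map_of_mem
            (fun L => (if wt U V L < 0 then (N : ℝ) + wt U V L else wt U V L)
            * (μ (base L) : ℝ)) hL₂))
          · exact mul_pos (lt_of_le_of_ne (hcoef L₂ hL₂) (Ne.symm hne))
              (hpos L₂ (by simp [hL₂]) μ hμ)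
          · intro r hr
            obtain ⟨L, hL, rfl⟩ := Multiset.mem_map.1 hr
            exact mul_nonneg (hcoef L hL) (hpos L (by simp [hL]) μ hμ).le
        rw [hsumJ] at h1
        have h3 : (μ (base L₀) : ℝ) < (((J.map fun L => μ (base L)).sum : NNReal) : ℝ) := by
          have : (N : ℝ) * (μ (base L₀) : ℝ) <
            N * (((J.map fun L => μ (base L)).sum : NNReal) : ℝ) := by linarith
          exact lt_of_mul_lt_mul_left this hNR.le
        exact_mod_cast h3
      obtain ⟨S, F₂, h1, -, h3, h4, h5⟩ := stackOn hK hcolL hpvJ hlt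
      refine ⟨S, F₂, h1, h3, h4, h5 _ ?_⟩
      intro L hL L' hp heq
      have hLT := (hJmem L hL).1
      rwa [wt_piece hp (fun B hB => hU B (mem_atoms.2 ⟨L, by simp [hLT], hB⟩))
        (fun B hB => hV B (mem_atoms.2 ⟨L, by simp [hLT], hB⟩))] at heq
  obtain ⟨S, F₂, hR, hS, hF₂, hcount⟩ := hmain
  have hcU : ∀ L ∈ L₀ ::ₘ T', ∀ B ∈ L, B ⊆ U ∨ Disjoint B U :=
    fun L hL B hB => hU B (mem_atoms.2 ⟨L, hL, hB⟩)
  have hcV : ∀ L ∈ L₀ ::ₘ T', ∀ B ∈ L, B ⊆ V ∨ Disjoint B V :=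
    fun L hL B hB => hV B (mem_atoms.2 ⟨L, hL, hB⟩)
  have hSw : ∀ L ∈ S, |wt U V L| < N := by
    intro L' hL'
    obtain ⟨L, hL, L₁, M', hp1, hp2, rfl⟩ := hS L' hL'
    have hLT : L ∈ L₀ ::ₘ T' := by simp [(hJmem L hL).1]
    rw [wt_append, wt_piece hp1 (hcU L hLT) (hcV L hLT), wt_piece hp2 (hcU _ hL₀) (hcV _ hL₀),
      hw]
    have h1 := abs_le.1 (hle L hLT)
    have h2 := (hJmem L hL).2
    rw [abs_lt]; constructor <;> omega
  refine ⟨S + F₂ + P, ?_, ?_, ?_⟩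
  · have := hR.add_right P
    rw [Multiset.cons_add, hJP] at this
    exact this
  · intro L hL
    rcases Multiset.mem_add.1 hL with hL | hL
    · rcases Multiset.mem_add.1 hL with hL | hL
      · exact (hSw L hL).le
      · obtain ⟨M, hM, hp⟩ := hF₂ L hL
        have hMT : M ∈ L₀ ::ₘ T' := by simp [(hJmem M hM).1]
        rw [wt_piece hp (hcU M hMT) (hcV M hMT)]
        exact hle M hMT
    · exact hle L (by simp [(hPmem L hL).1])
  · have h0 : S.countP (fun L => |wt U V L| = N) = 0 :=
      Multiset.countP_eq_zero.2 fun L hL h => absurd h (hSw L hL).ne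
    rw [Multiset.countP_add, Multiset.countP_add, h0,
      Multiset.countP_cons_of_pos _ (by rw [hw, abs_of_pos hN]), ← hJP, Multiset.countP_add]
    omega

/-- If `U ∼ V` then a family of columns compatible with `U` and `V` has a refinement each column
of which has as many atoms in `U` as in `V`. -/
lemma balance (hK : DynamicalSimplex K) (hUV : ∀ μ ∈ K, μ U = μ V) (N : ℕ) :
    ∀ (c : ℕ) (T : Multiset (List (Set X))), PV K T → (∀ x, cnt (atoms T) x = 1) →
    Compat T U → Compat T V → (∀ L ∈ T, |wt U V L| ≤ N) →
    T.countP (fun L => |wt U V L| = N) ≤ c →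
    ∃ S, Ref K T S ∧ ∀ L ∈ S, wt U V L = 0 := by
  induction N with
  | zero =>
    intro c T _ _ _ _ h _
    exact ⟨T, Ref.refl _, fun L hL => abs_nonpos_iff.1 (by simpa using h L hL)⟩
  | succ N ihN =>
    intro c
    induction c with
    | zero =>
      intro T hT hcov hU hV hle hc
      refine ihN _ T hT hcov hU hV ?_ le_rfl
      intro L hL
      have h1 := Multiset.countP_eq_zero.1 (Nat.le_zero.1 hc) L hL
      have h2 := hle L hL
      push_cast at h1 h2
      omega
    | succ c ihc =>
      intro T hT hcov hU hV hle hc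
      by_cases hex : ∃ L ∈ T, |wt U V L| = ((N + 1 : ℕ) : ℤ)
      · have hstep : ∃ S, Ref K T S ∧ (∀ L ∈ S, |wt U V L| ≤ ((N + 1 : ℕ) : ℤ)) ∧
            S.countP (fun L => |wt U V L| = ((N + 1 : ℕ) : ℤ)) <
              T.countP (fun L => |wt U V L| = ((N + 1 : ℕ) : ℤ)) := by
          obtain ⟨L₀, hL₀, hw⟩ := hex
          have hN : (0 : ℤ) < ((N + 1 : ℕ) : ℤ) := by positivity
          rcases (abs_eq hN.le).1 hw with h | h
          · exact balanceStep hK hT hcov hU hV hUV hN hle hL₀ h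
          · have := balanceStep (U := V) (V := U) hK hT hcov hV hU
              (fun μ hμ => (hUV μ hμ).symm) hN (fun L hL => by
                rw [wt_swap, abs_neg]; exact hle L hL) hL₀ (by rw [wt_swap, h, neg_neg])
            simpa only [wt_swap (U := U) (V := V), abs_neg] using this
        obtain ⟨S, hR, h1, h2⟩ := hstep
        obtain ⟨S', hR', h'⟩ := ihc S (hR.pv hT) (fun x => by rw [hR.cnt_atoms, hcov])
          (hU.ref hR) (hV.ref hR) h1 (by omega)
        exact ⟨S', hR.trans hR', h'⟩
      · push Not at hex
        refine ihc T hT hcov hU hV hle ?_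
        rw [Multiset.countP_eq_zero.2 hex]
        exact Nat.zero_le _

end balance

/-! ### The refining sequence -/

/-- `T` separates the clopen set `U` from its complement: `U` is a union of atoms of `T`, and
both the base and the top of `T` lie on one side of `U`. -/
structure Fine {X : Type*} (T : Multiset (List (Set X))) (U : Set X) : Prop where
  compat : Compat T U
  base_side : (∀ L ∈ T, base L ⊆ U) ∨ ∀ L ∈ T, Disjoint (base L) U
  top_side : (∀ L ∈ T, top L ⊆ U) ∨ ∀ L ∈ T, Disjoint (top L) U

section sequence

set_option linter.unusedSectionVars false

variable {X : Type*} [TopologicalSpace X] [CompactSpace X]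
    [TopologicalSpace.MetrizableSpace X] [TotallyDisconnectedSpace X] [Nonempty X]
    [MeasurableSpace X] [BorelSpace X]
  {K : Set (ProbabilityMeasure X)} {S T F H : Multiset (List (Set X))} {U V : Set X}

lemma Fine.ref (h : Fine T U) (hR : Ref K T S) (hT : ∀ L ∈ T, IsCol K L) : Fine S U := by
  obtain ⟨hb, ht, -⟩ := hR.sub hT
  refine ⟨h.compat.ref hR, ?_, ?_⟩
  · refine h.base_side.imp (fun h L hL x hx => ?_) (fun h L hL => ?_)
    · obtain ⟨M, hM, hxM⟩ := hb x ⟨L, hL, hx⟩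
      exact h M hM hxM
    · rw [Set.disjoint_left]
      intro x hx
      obtain ⟨M, hM, hxM⟩ := hb x ⟨L, hL, hx⟩
      exact Set.disjoint_left.1 (h M hM) hxM
  · refine h.top_side.imp (fun h L hL x hx => ?_) (fun h L hL => ?_)
    · obtain ⟨M, hM, hxM⟩ := ht x ⟨L, hL, hx⟩
      exact h M hM hxM
    · rw [Set.disjoint_left]
      intro x hx
      obtain ⟨M, hM, hxM⟩ := ht x ⟨L, hL, hx⟩
      exact Set.disjoint_left.1 (h M hM) hxM

lemma fine_of_sub {L₀ : List (Set X)} (hL₀ : L₀ ∈ T) (hL : IsCol K L₀) (h : Compat T U)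
    (hR : Ref K T S) (hb : ∀ L ∈ S, base L ⊆ base L₀) (ht : ∀ L ∈ S, top L ⊆ top L₀) :
    Fine S U := by
  refine ⟨h.ref hR, ?_, ?_⟩
  · exact (h _ (mem_atoms.2 ⟨L₀, hL₀, base_mem hL.ne⟩)).imp
      (fun h L hL => (hb L hL).trans h) (fun h L hL => h.mono_left (hb L hL))
  · exact (h _ (mem_atoms.2 ⟨L₀, hL₀, top_mem hL.ne⟩)).imp
      (fun h L hL => (ht L hL).trans h) (fun h L hL => h.mono_left (ht L hL))

/-- One stage of the construction: refine so as to separate `U` and `V` from their complements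
and, if `U ∼ V`, to balance all columns. -/
lemma exists_stage (hK : DynamicalSimplex K) (hT : PV K T) (hcov : ∀ x, cnt (atoms T) x = 1)
    (hU : IsClopen U) (hV : IsClopen V) :
    ∃ S, Ref K T S ∧ Fine S U ∧ Fine S V ∧
      ((∀ μ ∈ K, μ U = μ V) → ∀ L ∈ S, wt U V L = 0) := by
  obtain ⟨T₁, hR₁, hc₁⟩ := exists_compat hK hU hT.cols
  have hp₁ := hR₁.pv hT
  obtain ⟨T₂, hR₂, hc₂⟩ := exists_compat hK hV hp₁.cols
  have hp₂ := hR₂.pv hp₁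
  have hcov₂ : ∀ x, cnt (atoms T₂) x = 1 := fun x => by rw [hR₂.cnt_atoms, hR₁.cnt_atoms, hcov]
  obtain ⟨x⟩ := ‹Nonempty X›
  obtain ⟨B, hB, -⟩ := cnt_pos.1 (by rw [hcov₂ x]; exact one_pos : 0 < cnt (atoms T₂) x)
  obtain ⟨L₀, hL₀, -⟩ := mem_atoms.1 hB
  obtain ⟨T₃, hR₃, hb, ht⟩ := concentrate hK hp₂ hL₀
  have hp₃ := hR₃.pv hp₂
  have hcov₃ : ∀ x, cnt (atoms T₃) x = 1 := fun x => by rw [hR₃.cnt_atoms, hcov₂]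
  have hfU := fine_of_sub hL₀ (hp₂.cols _ hL₀) (hc₁.ref hR₂) hR₃ hb ht
  have hfV := fine_of_sub hL₀ (hp₂.cols _ hL₀) hc₂ hR₃ hb ht
  have hR := hR₁.trans (hR₂.trans hR₃)
  by_cases hUV : ∀ μ ∈ K, μ U = μ V
  · classical
    obtain ⟨S, hRS, hS⟩ := balance hK hUV (T₃.map fun L => (wt U V L).natAbs).sum _ T₃ hp₃ hcov₃
      hfU.compat hfV.compat (fun L hL => by
        have := Multiset.single_le_sum (s := T₃.map fun L => (wt U V L).natAbs)
          (fun _ _ => Nat.zero_le _) _ (Multiset.mem_map_of_mem _ hL)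
        rw [Int.abs_eq_natAbs]
        exact_mod_cast this) le_rfl
    exact ⟨S, hR.trans hRS, hfU.ref hRS hp₃.cols, hfV.ref hRS hp₃.cols, fun _ => hS⟩
  · exact ⟨T₃, hR, hfU, hfV, fun h => absurd h hUV⟩

/-- Iterating `exists_stage` along an enumeration of the pairs of clopen sets. -/
lemma exists_sequence (hK : DynamicalSimplex K) (hT : PV K T)
    (hcov : ∀ x, cnt (atoms T) x = 1) :
    ∃ Q : ℕ → Multiset (List (Set X)), Q 0 = T ∧ (∀ n, Ref K (Q n) (Q (n + 1))) ∧
      (∀ n, PV K (Q n)) ∧ (∀ n x, cnt (atoms (Q n)) x = 1) ∧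
      ∀ U V : Set X, IsClopen U → IsClopen V → ∃ n, Fine (Q n) U ∧ Fine (Q n) V ∧
        ((∀ μ ∈ K, μ U = μ V) → ∀ L ∈ Q n, wt U V L = 0) := by
  have : SecondCountableTopology X := by
    let := TopologicalSpace.metrizableSpaceMetric X
    infer_instance
  have : Countable (TopologicalSpace.Clopens X) :=
    TopologicalSpace.Clopens.countable_iff_secondCountable.2 this
  obtain ⟨e, he⟩ := exists_surjective_nat
    (TopologicalSpace.Clopens X × TopologicalSpace.Clopens X)
  have hstep : ∀ (n : ℕ) (T : {T : Multiset (List (Set X)) // PV K T ∧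
      ∀ x, cnt (atoms T) x = 1}), ∃ S : {T : Multiset (List (Set X)) // PV K T ∧
      ∀ x, cnt (atoms T) x = 1}, Ref K T.1 S.1 ∧ Fine S.1 ((e n).1 : Set X) ∧
        Fine S.1 ((e n).2 : Set X) ∧
        ((∀ μ ∈ K, μ ((e n).1 : Set X) = μ ((e n).2 : Set X)) →
          ∀ L ∈ S.1, wt ((e n).1 : Set X) ((e n).2 : Set X) L = 0) := by
    rintro n ⟨T, hT, hcov⟩
    obtain ⟨S, hR, h⟩ := exists_stage hK hT hcov (e n).1.isClopen (e n).2.isClopen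
    exact ⟨⟨S, hR.pv hT, fun x => by rw [hR.cnt_atoms, hcov]⟩, hR, h⟩
  choose φ hφ using hstep
  let Q : ℕ → {T : Multiset (List (Set X)) // PV K T ∧ ∀ x, cnt (atoms T) x = 1} :=
    fun n => Nat.rec ⟨T, hT, hcov⟩ φ n
  refine ⟨fun n => (Q n).1, rfl, fun n => (hφ n (Q n)).1, fun n => (Q n).2.1,
    fun n => (Q n).2.2, fun U V hU hV => ?_⟩
  obtain ⟨n, hn⟩ := he (⟨U, hU⟩, ⟨V, hV⟩)
  refine ⟨n + 1, ?_⟩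
  have := (hφ n (Q n)).2
  rw [hn] at this
  exact this

end sequence

/-! ### Positions of points in the columns -/

/-- The point `x` lies in the level of index `j` of the column `L` of `T`. -/
def At {X : Type*} (T : Multiset (List (Set X))) (L : List (Set X)) (j : ℕ) (x : X) : Prop :=
  L ∈ T ∧ ∃ h : j < L.length, x ∈ L[j]

section link

set_option linter.unusedSectionVars false

variable {X : Type*} [TopologicalSpace X] [MeasurableSpace X]
  {K : Set (ProbabilityMeasure X)} {S T : Multiset (List (Set X))} {A U V : Set X}
  {L M : List (Set X)} {i j : ℕ} {x x' y y' : X}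

lemma exists_at (hcov : ∀ x, cnt (atoms T) x = 1) (x : X) : ∃ L j, At T L j x := by
  obtain ⟨B, hB, hx⟩ := cnt_pos.1 (by rw [hcov x]; exact one_pos : 0 < cnt (atoms T) x)
  obtain ⟨L, hL, hBL⟩ := mem_atoms.1 hB
  obtain ⟨j, hj, rfl⟩ := List.getElem_of_mem hBL
  exact ⟨L, j, hL, hj, hx⟩

lemma cnt_coe_pos {L : List (Set X)} (h : ∃ B ∈ L, x ∈ B) :
    0 < cnt (L : Multiset (Set X)) x :=
  cnt_pos.2 (by simpa using h)

lemma at_unique_level (hT : ∀ x, cnt (L : Multiset (Set X)) x ≤ 1) (hi : i < L.length)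
    (hj : j < L.length) (hxi : x ∈ L[i]) (hxj : x ∈ L[j]) : ¬ i < j := by
  intro hij
  have h1 : 0 < cnt (L.take j : Multiset (Set X)) x :=
    cnt_coe_pos ⟨L[i], List.mem_take_iff_getElem.2 ⟨i, by omega, rfl⟩, hxi⟩
  have h2 : 0 < cnt (L.drop j : Multiset (Set X)) x :=
    cnt_coe_pos ⟨L[j], List.mem_drop_iff_getElem.2 ⟨0, by omega, by simp⟩, hxj⟩
  have h3 := hT x
  rw [← List.take_append_drop j L, ← Multiset.coe_add, cnt_add] at h3
  omega

lemma At.unique (hT : PV K T) (h : At T L i x) (h' : At T M j x) : L = M ∧ i = j := by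
  obtain ⟨hL, hi, hxi⟩ := h
  obtain ⟨hM, hj, hxj⟩ := h'
  obtain ⟨T', rfl⟩ := Multiset.exists_cons_of_mem hL
  have hc := hT.cnt_le
  simp only [atoms_cons, cnt_add] at hc
  rcases Multiset.mem_cons.1 hM with rfl | hM'
  · refine ⟨rfl, ?_⟩
    have hc' : ∀ x, cnt (M : Multiset (Set X)) x ≤ 1 := fun x => by have := hc x; omega
    have h1 := at_unique_level hc' hi hj hxi hxj
    have h2 := at_unique_level hc' hj hi hxj hxi
    omega
  · exfalso
    have h1 : 0 < cnt (L : Multiset (Set X)) x := cnt_coe_pos ⟨_, List.getElem_mem hi, hxi⟩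
    have h2 : 0 < cnt (atoms T') x :=
      cnt_pos.2 ⟨_, mem_atoms.2 ⟨M, hM', List.getElem_mem hj⟩, hxj⟩
    have := hc x
    omega

lemma at_base (hT : PV K T) (hL : L ∈ T) (h : x ∈ base L) : At T L 0 x := by
  have := List.length_pos_of_ne_nil (hT.cols L hL).ne
  exact ⟨hL, this, by rwa [base_eq_getElem this] at h⟩

lemma at_top (hT : PV K T) (hL : L ∈ T) (h : x ∈ top L) : At T L (L.length - 1) x := by
  have := List.length_pos_of_ne_nil (hT.cols L hL).ne
  exact ⟨hL, by omega, by rwa [top_eq_getElem this] at h⟩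

lemma At.base_mem (h : At T L 0 x) : x ∈ base L := by
  obtain ⟨_, h, hx⟩ := h
  rwa [base_eq_getElem h]

lemma At.top_mem (h : At T L j x) (hj : ¬ j + 1 < L.length) : x ∈ top L := by
  obtain ⟨_, h, hx⟩ := h
  obtain rfl : j = L.length - 1 := by omega
  rwa [top_eq_getElem (by omega)]

/-- In terms of positions, `y` is a possible image of `x` iff it lies one level higher, or `x` is
in a top level and `y` in a base. -/
lemma link_iff (hT : PV K T) (hx : At T L i x) (hy : At T M j y) :
    Link T x y ↔ (L = M ∧ i + 1 = j) ∨ (¬ i + 1 < L.length ∧ j = 0) := by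
  constructor
  · rintro (⟨N, hN, k, hk, hxk, hyk⟩ | ⟨⟨N, hN, hxN⟩, ⟨N', hN', hyN⟩⟩)
    · obtain ⟨rfl, rfl⟩ := hx.unique hT ⟨hN, by omega, hxk⟩
      obtain ⟨rfl, rfl⟩ := hy.unique hT ⟨hN, hk, hyk⟩
      exact .inl ⟨rfl, rfl⟩
    · obtain ⟨rfl, rfl⟩ := hx.unique hT (at_top hT hN hxN)
      obtain ⟨rfl, rfl⟩ := hy.unique hT (at_base hT hN' hyN)
      exact .inr ⟨by omega, rfl⟩
  · rintro (⟨rfl, rfl⟩ | ⟨h, rfl⟩)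
    · obtain ⟨hL, hi, hxi⟩ := hx
      obtain ⟨-, hj, hyj⟩ := hy
      exact .inl ⟨L, hL, i, hj, hxi, hyj⟩
    · exact .inr ⟨⟨L, hx.1, hx.top_mem h⟩, ⟨M, hy.1, hy.base_mem⟩⟩

lemma link_congr (hT : PV K T) (hx : At T L i x) (hx' : At T L i x') (hy : At T M j y)
    (hy' : At T M j y') (h : Link T x y) : Link T x' y' := by
  rw [link_iff hT hx' hy']
  rwa [link_iff hT hx hy] at h

lemma exists_link (hT : PV K T) (hcov : ∀ x, cnt (atoms T) x = 1) (x : X) :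
    ∃ y, Link T x y := by
  obtain ⟨L, i, hx⟩ := exists_at hcov x
  have hc := hT.cols L hx.1
  by_cases h : i + 1 < L.length
  · obtain ⟨y, hy⟩ := hc.nonempty _ (List.getElem_mem h)
    exact ⟨y, (link_iff hT hx ⟨hx.1, h, hy⟩).2 (.inl ⟨rfl, rfl⟩)⟩
  · obtain ⟨y, hy⟩ := hc.nonempty _ (base_mem hc.ne)
    exact ⟨y, (link_iff hT hx (at_base hT hx.1 hy)).2 (.inr ⟨h, rfl⟩)⟩

lemma exists_link' (hT : PV K T) (hcov : ∀ x, cnt (atoms T) x = 1) (y : X) :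
    ∃ x, Link T x y := by
  obtain ⟨L, j, hy⟩ := exists_at hcov y
  have hc := hT.cols L hy.1
  rcases j with _ | j
  · obtain ⟨x, hx⟩ := hc.nonempty _ (top_mem hc.ne)
    exact ⟨x, (link_iff hT (at_top hT hy.1 hx) hy).2 (.inr ⟨by omega, rfl⟩)⟩
  · have hj : j < L.length := by have := hy.2.1; omega
    obtain ⟨x, hx⟩ := hc.nonempty _ (List.getElem_mem hj)
    exact ⟨x, (link_iff hT ⟨hy.1, hj, hx⟩ hy).2 (.inl ⟨rfl, rfl⟩)⟩

lemma Compat.mem_iff (hc : Compat T A) (hx : At T L i x) (hx' : At T L i x') :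
    x ∈ A ↔ x' ∈ A := by
  obtain ⟨hL, hi, hxi⟩ := hx
  obtain ⟨-, hi', hxi'⟩ := hx'
  rcases hc _ (mem_atoms.2 ⟨L, hL, List.getElem_mem hi⟩) with h | h
  · exact iff_of_true (h hxi) (h hxi')
  · exact iff_of_false (Set.disjoint_left.1 h hxi) (Set.disjoint_left.1 h hxi')

/-- Two possible images of a point are on the same side of `A` as soon as `A` is a union of atoms
and the base lies on one side of `A`. -/
lemma Compat.image_mem_iff (hA : Compat T A)
    (hb : (∀ L ∈ T, base L ⊆ A) ∨ ∀ L ∈ T, Disjoint (base L) A) (hT : PV K T)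
    (hcov : ∀ x, cnt (atoms T) x = 1) (h : Link T x y) (h' : Link T x y') :
    y ∈ A ↔ y' ∈ A := by
  obtain ⟨L, i, hx⟩ := exists_at hcov x
  obtain ⟨M, j, hy⟩ := exists_at hcov y
  obtain ⟨M', j', hy'⟩ := exists_at hcov y'
  rw [link_iff hT hx hy] at h
  rw [link_iff hT hx hy'] at h'
  have e1 := hy.2.1
  have e2 := hy'.2.1
  rcases h with ⟨rfl, rfl⟩ | ⟨h, rfl⟩ <;> rcases h' with ⟨rfl, rfl⟩ | ⟨h', rfl⟩
  · exact hA.mem_iff hy hy'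
  · omega
  · omega
  · rcases hb with hb | hb
    · exact iff_of_true (hb M hy.1 hy.base_mem) (hb M' hy'.1 hy'.base_mem)
    · exact iff_of_false (Set.disjoint_left.1 (hb M hy.1) hy.base_mem)
        (Set.disjoint_left.1 (hb M' hy'.1) hy'.base_mem)

lemma Fine.image_mem_iff (hF : Fine T A) (hT : PV K T) (hcov : ∀ x, cnt (atoms T) x = 1)
    (h : Link T x y) (h' : Link T x y') : y ∈ A ↔ y' ∈ A :=
  hF.compat.image_mem_iff hF.base_side hT hcov h h'

/-- Two possible preimages of a point are on the same side of `A`. -/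
lemma Fine.preimage_mem_iff (hF : Fine T A) (hT : PV K T) (hcov : ∀ x, cnt (atoms T) x = 1)
    (h : Link T x y) (h' : Link T x' y) : x ∈ A ↔ x' ∈ A := by
  obtain ⟨L, i, hy⟩ := exists_at hcov y
  obtain ⟨M, j, hx⟩ := exists_at hcov x
  obtain ⟨M', j', hx'⟩ := exists_at hcov x'
  rw [link_iff hT hx hy] at h
  rw [link_iff hT hx' hy] at h'
  rcases h with ⟨rfl, rfl⟩ | ⟨h, rfl⟩ <;> rcases h' with ⟨rfl, h'⟩ | ⟨h', h''⟩
  · obtain rfl : j = j' := by omega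
    exact hF.compat.mem_iff hx hx'
  · omega
  · omega
  · rcases hF.top_side with hb | hb
    · exact iff_of_true (hb M hx.1 (hx.top_mem h)) (hb M' hx'.1 (hx'.top_mem h'))
    · exact iff_of_false (Set.disjoint_left.1 (hb M hx.1) (hx.top_mem h))
        (Set.disjoint_left.1 (hb M' hx'.1) (hx'.top_mem h'))

lemma isOpen_at (hT : PV K T) : IsOpen {x | At T L i x} := by
  by_cases hL : L ∈ T
  · by_cases hi : i < L.length
    · have : {x | At T L i x} = L[i] := by ext x; simp [At, hL, hi]
      rw [this]
      exact ((hT.cols L hL).clopen _ (List.getElem_mem hi)).2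
    · have : {x | At T L i x} = ∅ := by ext x; simp [At, hi]
      rw [this]; exact isOpen_empty
  · have : {x | At T L i x} = ∅ := by ext x; simp [At, hL]
    rw [this]; exact isOpen_empty

lemma isClosed_image (hT : PV K T) (hcov : ∀ x, cnt (atoms T) x = 1) (x : X) :
    IsClosed {y | Link T x y} := by
  rw [← isOpen_compl_iff, isOpen_iff_mem_nhds]
  intro y hy
  obtain ⟨L, i, hx⟩ := exists_at hcov x
  obtain ⟨M, j, hyM⟩ := exists_at hcov y
  filter_upwards [(isOpen_at hT).mem_nhds hyM] with y' hy' h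
  exact hy (link_congr hT hx hx hy' hyM h)

lemma isClosed_preimage (hT : PV K T) (hcov : ∀ x, cnt (atoms T) x = 1) (y : X) :
    IsClosed {x | Link T x y} := by
  rw [← isOpen_compl_iff, isOpen_iff_mem_nhds]
  intro x hx
  obtain ⟨L, i, hy⟩ := exists_at hcov y
  obtain ⟨M, j, hxM⟩ := exists_at hcov x
  filter_upwards [(isOpen_at hT).mem_nhds hxM] with x' hx' h
  exact hx (link_congr hT hx' hxM hy hy h)

lemma At.up_iff (hT : PV K T) (hcov : ∀ x, cnt (atoms T) x = 1) (h : Link T x y)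
    (hj : j + 1 < L.length) : At T L j x ↔ At T L (j + 1) y := by
  constructor
  · intro hx
    obtain ⟨M, i, hy⟩ := exists_at hcov y
    rcases (link_iff hT hx hy).1 h with ⟨rfl, rfl⟩ | ⟨h, -⟩
    · exact hy
    · exact absurd hj h
  · intro hy
    obtain ⟨M, i, hx⟩ := exists_at hcov x
    rcases (link_iff hT hx hy).1 h with ⟨rfl, h⟩ | ⟨-, h⟩
    · obtain rfl : i = j := by omega
      exact hx
    · omega

end link

/-! ### The limit homeomorphism -/

section limit

set_option linter.unusedSectionVars false

variable {X : Type*} [TopologicalSpace X] [CompactSpace X]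
    [TopologicalSpace.MetrizableSpace X] [TotallyDisconnectedSpace X]
    [MeasurableSpace X] [BorelSpace X]
  {K : Set (ProbabilityMeasure X)} {Q : ℕ → Multiset (List (Set X))} {U V : Set X}

/-- The relations prescribed by a refining sequence which separates all clopen sets shrink to the
graph of a homeomorphism. -/
lemma exists_limit (hR : ∀ n, Ref K (Q n) (Q (n + 1))) (hpv : ∀ n, PV K (Q n))
    (hcov : ∀ n x, cnt (atoms (Q n)) x = 1) (hfine : ∀ A, IsClopen A → ∃ n, Fine (Q n) A) :
    ∃ h : X ≃ₜ X, ∀ n x, Link (Q n) x (h x) := by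
  have hanti : ∀ n x y, Link (Q (n + 1)) x y → Link (Q n) x y :=
    fun n => ((hR n).sub (hpv n).cols).2.2
  have hex : ∀ x, ∃ y, ∀ n, Link (Q n) x y := by
    intro x
    obtain ⟨y, hy⟩ := IsCompact.nonempty_iInter_of_sequence_nonempty_isCompact_isClosed
      (fun n => {y | Link (Q n) x y}) (fun n y hy => hanti n x y hy)
      (fun n => exists_link (hpv n) (hcov n) x)
      (isClosed_image (hpv 0) (hcov 0) x).isCompact
      (fun n => isClosed_image (hpv n) (hcov n) x)
    exact ⟨y, fun n => Set.mem_iInter.1 hy n⟩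
  have hex' : ∀ y, ∃ x, ∀ n, Link (Q n) x y := by
    intro y
    obtain ⟨x, hx⟩ := IsCompact.nonempty_iInter_of_sequence_nonempty_isCompact_isClosed
      (fun n => {x | Link (Q n) x y}) (fun n x hx => hanti n x y hx)
      (fun n => exists_link' (hpv n) (hcov n) y)
      (isClosed_preimage (hpv 0) (hcov 0) y).isCompact
      (fun n => isClosed_preimage (hpv n) (hcov n) y)
    exact ⟨x, fun n => Set.mem_iInter.1 hx n⟩
  have huniq : ∀ x y y', (∀ n, Link (Q n) x y) → (∀ n, Link (Q n) x y') → y = y' := by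
    intro x y y' h h'
    by_contra hne
    obtain ⟨A, hA, hyA, hyA'⟩ := exists_isClopen_of_totally_separated hne
    obtain ⟨n, hn⟩ := hfine A hA
    exact hyA' ((hn.image_mem_iff (hpv n) (hcov n) (h n) (h' n)).1 hyA)
  have huniq' : ∀ x x' y, (∀ n, Link (Q n) x y) → (∀ n, Link (Q n) x' y) → x = x' := by
    intro x x' y h h'
    by_contra hne
    obtain ⟨A, hA, hyA, hyA'⟩ := exists_isClopen_of_totally_separated hne
    obtain ⟨n, hn⟩ := hfine A hA
    exact hyA' ((hn.preimage_mem_iff (hpv n) (hcov n) (h n) (h' n)).1 hyA)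
  choose f hf using hex
  choose f' hf' using hex'
  have hcf : Continuous f := by
    refine isTopologicalBasis_isClopen.continuous_iff.2 fun A hA => ?_
    rw [isOpen_iff_mem_nhds]
    intro x hx
    obtain ⟨n, hn⟩ := hfine A hA
    obtain ⟨L, i, hxL⟩ := exists_at (hcov n) x
    obtain ⟨M, j, hyM⟩ := exists_at (hcov n) (f x)
    filter_upwards [(isOpen_at (hpv n)).mem_nhds hxL] with x' hx'
    exact (hn.image_mem_iff (hpv n) (hcov n)
      (link_congr (hpv n) hxL hx' hyM hyM (hf x n)) (hf x' n)).1 hx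
  have hcf' : Continuous f' := by
    refine isTopologicalBasis_isClopen.continuous_iff.2 fun A hA => ?_
    rw [isOpen_iff_mem_nhds]
    intro y hy
    obtain ⟨n, hn⟩ := hfine A hA
    obtain ⟨L, i, hyL⟩ := exists_at (hcov n) y
    obtain ⟨M, j, hxM⟩ := exists_at (hcov n) (f' y)
    filter_upwards [(isOpen_at (hpv n)).mem_nhds hyL] with y' hy'
    exact (hn.preimage_mem_iff (hpv n) (hcov n)
      (link_congr (hpv n) hxM hxM hyL hy' (hf' y n)) (hf' y' n)).1 hy
  exact ⟨⟨⟨f, f', fun x => huniq' _ _ (f x) (hf' _) (hf x),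
    fun y => huniq (f' y) _ _ (hf _) (hf' y)⟩, hcf, hcf'⟩, fun n x => hf x n⟩

/-- A homeomorphism following a column structure maps each level but the top one onto the next
one, so it preserves the measure of clopen sets which are unions of levels and whose complement
contains the base. -/
lemma measure_preimage_of_disjoint {T : Multiset (List (Set X))} (hT : PV K T)
    (hcov : ∀ x, cnt (atoms T) x = 1) {h : X ≃ₜ X} (hh : ∀ x, Link T x (h x)) {A : Set X}
    (hA : Compat T A) (hb : ∀ L ∈ T, Disjoint (base L) A) {μ : ProbabilityMeasure X}
    (hμ : μ ∈ K) : μ.map (f := h) h.continuous.measurable.aemeasurable A = μ A := by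
  classical
  set ν := μ.map (f := h) h.continuous.measurable.aemeasurable with hν
  have hle : ∀ x, cnt ((atoms T).filter (· ⊆ A)) x ≤ 1 := fun x =>
    (cnt_mono (Multiset.filter_le _ _) x).trans (hcov x).le
  have hcl : ∀ B ∈ (atoms T).filter (· ⊆ A), IsClopen B := by
    intro B hB
    obtain ⟨L, hL, hBL⟩ := mem_atoms.1 (Multiset.mem_filter.1 hB).1
    exact (hT.cols L hL).clopen B hBL
  have hAeq : {x | ∃ B ∈ (atoms T).filter (· ⊆ A), x ∈ B} = A := by
    ext x
    constructor
    · rintro ⟨B, hB, hx⟩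
      exact (Multiset.mem_filter.1 hB).2 hx
    · intro hx
      obtain ⟨L, j, hL, hj, hxj⟩ := exists_at hcov x
      have hm := mem_atoms.2 ⟨L, hL, List.getElem_mem hj⟩
      refine ⟨L[j], Multiset.mem_filter.2 ⟨hm, ?_⟩, hxj⟩
      exact (hA _ hm).resolve_right fun hd => Set.disjoint_left.1 hd hxj hx
  have e1 := sum_measure _ hcl hle μ
  have e2 := sum_measure _ hcl hle ν
  rw [hAeq] at e1 e2
  rw [← e1, ← e2]
  congr 1
  refine Multiset.map_congr rfl fun B hB => ?_
  obtain ⟨hB, hBA⟩ := Multiset.mem_filter.1 hB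
  obtain ⟨L, hL, hBL⟩ := mem_atoms.1 hB
  obtain ⟨j, hj, rfl⟩ := List.getElem_of_mem hBL
  have hc := hT.cols L hL
  rcases j with _ | j
  · exfalso
    obtain ⟨x, hx⟩ := hc.nonempty _ hBL
    refine Set.disjoint_left.1 (hb L hL) ?_ (hBA hx)
    rwa [base_eq_getElem hj]
  · have hpre : h ⁻¹' L[j + 1] = L[j] := by
      ext x
      have := At.up_iff hT hcov (hh x) hj
      simp only [At, hL, hj, true_and, exists_true_left, (by omega : j < L.length)] at this
      exact this.symm
    rw [hν, ProbabilityMeasure.map_apply _ _ (hc.clopen _ hBL).2.measurableSet, hpre]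
    exact hc.eqv _ (List.getElem_mem _) _ hBL μ hμ

lemma preservesAll_limit (hpv : ∀ n, PV K (Q n))
    (hcov : ∀ n x, cnt (atoms (Q n)) x = 1) (hfine : ∀ A, IsClopen A → ∃ n, Fine (Q n) A)
    {h : X ≃ₜ X} (hh : ∀ n x, Link (Q n) x (h x)) : PreservesAll K h := by
  intro μ hμ
  have hsc : SecondCountableTopology X := by
    let := TopologicalSpace.metrizableSpaceMetric X
    infer_instance
  set ν := μ.map (f := h) h.continuous.measurable.aemeasurable with hν
  have hcase : ∀ A : Set X, IsClopen A → (∃ n, Compat (Q n) A ∧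
      ∀ L ∈ Q n, Disjoint (base L) A) → ν A = μ A := by
    rintro A hA ⟨n, h1, h2⟩
    exact measure_preimage_of_disjoint (hpv n) (hcov n) (hh n) h1 h2 hμ
  have hclopen : ∀ A : Set X, IsClopen A → (ν : Measure X) A = (μ : Measure X) A := by
    intro A hA
    obtain ⟨n, hn⟩ := hfine A hA
    rcases hn.base_side with hb | hb
    · have hc := hcase Aᶜ hA.compl ⟨n, fun B hB => ?_, fun L hL => ?_⟩
      · have hc' : (ν : Measure X) Aᶜ = (μ : Measure X) Aᶜ := by
          rw [← ProbabilityMeasure.ennreal_coeFn_eq_coeFn_toMeasure,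
            ← ProbabilityMeasure.ennreal_coeFn_eq_coeFn_toMeasure, hc]
        have h1 := prob_compl_eq_one_sub (μ := (ν : Measure X)) hA.compl.2.measurableSet
        have h2 := prob_compl_eq_one_sub (μ := (μ : Measure X)) hA.compl.2.measurableSet
        rw [compl_compl] at h1 h2
        rw [h1, h2, hc']
      · rcases hn.compat B hB with h | h
        · exact .inr (Set.disjoint_compl_right_iff_subset.2 h)
        · exact .inl (Set.subset_compl_iff_disjoint_right.2 h)
      · exact Set.disjoint_compl_right_iff_subset.2 (hb L hL)
    · rw [← ProbabilityMeasure.ennreal_coeFn_eq_coeFn_toMeasure,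
        ← ProbabilityMeasure.ennreal_coeFn_eq_coeFn_toMeasure,
        hcase A hA ⟨n, hn.compat, hb⟩]
  show (μ : Measure X).map h = (μ : Measure X)
  have : (ν : Measure X) = (μ : Measure X).map h := rfl
  rw [← this]
  refine ext_of_generate_finite {A | IsClopen A} ?_ ?_ hclopen (by simp)
  · rw [BorelSpace.measurable_eq (α := X)]
    exact isTopologicalBasis_isClopen.borel_eq_generateFrom
  · exact fun A hA B hB _ => hA.inter hB

end limit

/-! ### Saturation of the limit -/

section saturated

set_option linter.unusedSectionVars false

variable {X : Type*} [TopologicalSpace X] [MeasurableSpace X]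
  {K : Set (ProbabilityMeasure X)} {T : Multiset (List (Set X))} {U V : Set X}
  {L : List (Set X)} {i j : ℕ} {x : X} {h : X ≃ₜ X}

lemma continuous_zpow {X : Type*} [TopologicalSpace X] (h : X ≃ₜ X) (n : ℤ) : Continuous fun x => (h.toEquiv ^ n) x := by
  have hpos : ∀ (h : X ≃ₜ X) (k : ℕ), Continuous fun x => (h.toEquiv ^ k) x := by
    intro h k
    have := h.continuous.iterate k
    rw [show (⇑h : X → X) = ⇑h.toEquiv from rfl, Equiv.Perm.iterate_eq_pow] at this
    exact this
  obtain ⟨k, rfl | rfl⟩ := n.eq_nat_or_neg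
  · simpa using hpos h k
  · have := hpos h.symm k
    rw [show h.symm.toEquiv = h.toEquiv⁻¹ from rfl, inv_pow] at this
    simpa using this

lemma At.pow_iff (hT : PV K T) (hcov : ∀ x, cnt (atoms T) x = 1) (hh : ∀ x, Link T x (h x))
    (k : ℕ) : ∀ x, i + k < L.length → (At T L i x ↔ At T L (i + k) ((h.toEquiv ^ k) x)) := by
  induction k with
  | zero => intro x _; simp
  | succ k ih =>
    intro x hk
    rw [ih x (by omega), At.up_iff hT hcov (hh _) (by omega), pow_succ']
    rfl

/-- A power of `h` moves a level of a column to any other prescribed level of this column. -/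
lemma At.zpow (hT : PV K T) (hcov : ∀ x, cnt (atoms T) x = 1) (hh : ∀ x, Link T x (h x))
    (hx : At T L i x) (hj : j < L.length) :
    At T L j ((h.toEquiv ^ ((j : ℤ) - i)) x) := by
  have hi := hx.2.1
  rcases le_total i j with hij | hij
  · obtain ⟨k, rfl⟩ := Nat.exists_eq_add_of_le hij
    have := (At.pow_iff hT hcov hh k x hj).1 hx
    simpa using this
  · obtain ⟨k, rfl⟩ := Nat.exists_eq_add_of_le hij
    have e : ((j : ℤ) - ((j + k : ℕ) : ℤ)) = -(k : ℤ) := by push_cast; ring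
    rw [e, At.pow_iff hT hcov hh k _ hi]
    simpa using hx

/-- If `L` has as many levels in `U` as in `V`, some permutation of its levels maps the levels in
`U` to the levels in `V`. -/
lemma exists_perm (L : List (Set X)) (hw : wt U V L = 0) :
    ∃ σ : Equiv.Perm (Fin L.length), ∀ j, L[j] ⊆ U ↔ L[σ j] ⊆ V := by
  classical
  have hcard : ∀ U : Set X,
      Fintype.card {j : Fin L.length // L[j] ⊆ U} = L.countP (fun B => B ⊆ U) := by
    intro U
    have h1 : (L : Multiset (Set X)) = (Finset.univ : Finset (Fin L.length)).val.map
        (fun j => L[j]) := by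
      rw [Fin.univ_val_map]
      simp
    have h2 : L.countP (fun B => B ⊆ U) = (L : Multiset (Set X)).countP (fun B => B ⊆ U) := by
      simp
    rw [h2, h1, Multiset.countP_map, Fintype.card_subtype]
    rfl
  have he : Fintype.card {j : Fin L.length // L[j] ⊆ U} =
      Fintype.card {j : Fin L.length // L[j] ⊆ V} := by
    rw [hcard, hcard]
    unfold wt at hw
    omega
  let e := Fintype.equivOfCardEq he
  refine ⟨e.extendSubtype, fun j => ⟨fun h => e.extendSubtype_mem j h, fun h => ?_⟩⟩
  by_contra hn
  exact e.extendSubtype_not_mem j hn h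

/-- The piecewise power of `h` which permutes the levels of each column `L` by `σ L`. -/
noncomputable def levelMap (hcov : ∀ x, cnt (atoms T) x = 1) (h : X ≃ₜ X)
    (σ : (L : List (Set X)) → Equiv.Perm (Fin L.length)) (x : X) : X :=
  let p := (exists_at hcov x).choose_spec.choose_spec
  (h.toEquiv ^ (((σ _ ⟨_, p.2.1⟩ : ℕ) : ℤ) - ((exists_at hcov x).choose_spec.choose : ℕ))) x

lemma levelMap_eq (hT : PV K T) (hcov : ∀ x, cnt (atoms T) x = 1)
    (σ : (L : List (Set X)) → Equiv.Perm (Fin L.length)) (j : Fin L.length)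
    (hx : At T L j x) :
    levelMap hcov h σ x = (h.toEquiv ^ (((σ L j : ℕ) : ℤ) - (j : ℕ))) x := by
  have key : ∀ (M : List (Set X)) (i : ℕ) (hM : At T M i x),
      (h.toEquiv ^ (((σ M ⟨i, hM.2.1⟩ : ℕ) : ℤ) - (i : ℕ))) x =
      (h.toEquiv ^ (((σ L j : ℕ) : ℤ) - (j : ℕ))) x := by
    intro M i hM
    obtain ⟨rfl, rfl⟩ := hM.unique hT hx
    rfl
  exact key _ _ (exists_at hcov x).choose_spec.choose_spec

lemma continuous_levelMap (hT : PV K T) (hcov : ∀ x, cnt (atoms T) x = 1)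
    (σ : (L : List (Set X)) → Equiv.Perm (Fin L.length)) :
    Continuous (levelMap hcov h σ) := by
  rw [continuous_iff_continuousAt]
  intro x
  obtain ⟨L, j, hx⟩ := exists_at hcov x
  refine (continuous_zpow h (((σ L ⟨j, hx.2.1⟩ : ℕ) : ℤ) - (j : ℕ))).continuousAt.congr ?_
  filter_upwards [(isOpen_at hT).mem_nhds hx] with y hy
  exact (levelMap_eq hT hcov σ ⟨j, hx.2.1⟩ hy).symm

lemma levelMap_at (hT : PV K T) (hcov : ∀ x, cnt (atoms T) x = 1) (hh : ∀ x, Link T x (h x))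
    (σ : (L : List (Set X)) → Equiv.Perm (Fin L.length)) (j : Fin L.length)
    (hx : At T L j x) : At T L (σ L j) (levelMap hcov h σ x) := by
  rw [levelMap_eq hT hcov σ j hx]
  exact hx.zpow hT hcov hh (σ L j).2

lemma levelMap_symm (hT : PV K T) (hcov : ∀ x, cnt (atoms T) x = 1) (hh : ∀ x, Link T x (h x))
    (σ : (L : List (Set X)) → Equiv.Perm (Fin L.length)) (x : X) :
    levelMap hcov h (fun L => (σ L).symm) (levelMap hcov h σ x) = x := by
  obtain ⟨L, j, hx⟩ := exists_at hcov x
  have h1 := levelMap_at hT hcov hh σ ⟨j, hx.2.1⟩ hx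
  rw [levelMap_eq hT hcov (fun L => (σ L).symm) _ h1,
    levelMap_eq hT hcov σ ⟨j, hx.2.1⟩ hx, ← Equiv.Perm.mul_apply, ← zpow_add]
  simp

/-- The homeomorphism `levelMap`. -/
noncomputable def levelHomeo (hT : PV K T) (hcov : ∀ x, cnt (atoms T) x = 1)
    (hh : ∀ x, Link T x (h x)) (σ : (L : List (Set X)) → Equiv.Perm (Fin L.length)) :
    X ≃ₜ X where
  toFun := levelMap hcov h σ
  invFun := levelMap hcov h (fun L => (σ L).symm)
  left_inv := levelMap_symm hT hcov hh σ
  right_inv := levelMap_symm hT hcov hh (fun L => (σ L).symm)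
  continuous_toFun := continuous_levelMap hT hcov σ
  continuous_invFun := continuous_levelMap hT hcov _

lemma levelHomeo_mem (hT : PV K T) (hcov : ∀ x, cnt (atoms T) x = 1)
    (hh : ∀ x, Link T x (h x)) (σ : (L : List (Set X)) → Equiv.Perm (Fin L.length)) :
    InTopologicalFullGroup h (levelHomeo hT hcov hh σ) := by
  classical
  let ι := (L : {L // L ∈ T.toFinset}) × Fin L.1.length
  let e := Fintype.equivFin ι
  let a : ι → Set X := fun p => p.1.1[p.2]
  refine ⟨Fintype.card ι, fun k => a (e.symm k),
    fun k => ((σ _ (e.symm k).2 : ℕ) : ℤ) - ((e.symm k).2 : ℕ), fun k => ?_, fun x => ?_,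
    fun k x hx => ?_⟩
  · exact (hT.cols _ (Multiset.mem_toFinset.1 (e.symm k).1.2)).clopen _ (List.getElem_mem _)
  · obtain ⟨L, j, hL, hj, hx⟩ := exists_at hcov x
    refine ⟨e ⟨⟨L, Multiset.mem_toFinset.2 hL⟩, ⟨j, hj⟩⟩, ?_, ?_⟩
    · change x ∈ a (e.symm (e _))
      rw [e.symm_apply_apply]
      exact hx
    · intro k hk
      change x ∈ a (e.symm k) at hk
      rw [← Equiv.symm_apply_eq]
      revert hk
      generalize e.symm k = p
      obtain ⟨⟨M, hM⟩, i⟩ := p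
      intro hk
      obtain ⟨rfl, h2⟩ := At.unique hT (⟨Multiset.mem_toFinset.1 hM, i.2, hk⟩ : At T M i x)
        ⟨hL, hj, hx⟩
      obtain rfl : i = ⟨j, hj⟩ := Fin.ext h2
      rfl
  · exact levelMap_eq hT hcov σ _ ⟨Multiset.mem_toFinset.1 (e.symm k).1.2, (e.symm k).2.2, hx⟩

/-- A homeomorphism following a column structure which is compatible with `U` and `V` and whose
columns are balanced has `U` and `V` in the same orbit of its topological full group. -/
lemma exists_of_balanced (hT : PV K T) (hcov : ∀ x, cnt (atoms T) x = 1)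
    (hh : ∀ x, Link T x (h x)) (hU : Compat T U) (hV : Compat T V)
    (hw : ∀ L ∈ T, wt U V L = 0) :
    ∃ f : X ≃ₜ X, InTopologicalFullGroup h f ∧ f '' U = V := by
  have hσ : ∀ L : List (Set X), ∃ σ : Equiv.Perm (Fin L.length),
      L ∈ T → ∀ j, L[j] ⊆ U ↔ L[σ j] ⊆ V := by
    intro L
    by_cases hL : L ∈ T
    · obtain ⟨σ, hσ⟩ := exists_perm L (hw L hL)
      exact ⟨σ, fun _ => hσ⟩
    · exact ⟨1, fun h => absurd h hL⟩
  choose σ hσ using hσ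
  refine ⟨levelHomeo hT hcov hh σ, levelHomeo_mem hT hcov hh σ, ?_⟩
  have hmem : ∀ {A : Set X}, Compat T A → ∀ {L : List (Set X)} {j : ℕ} {x : X}
      (hx : At T L j x), (x ∈ A ↔ L[j]'hx.2.1 ⊆ A) := by
    intro A hA L j x hx
    refine ⟨fun hxA => ?_, fun h => h hx.2.2⟩
    exact (hA _ (mem_atoms.2 ⟨L, hx.1, List.getElem_mem _⟩)).resolve_right
      fun hd => Set.disjoint_left.1 hd hx.2.2 hxA
  have hiff : ∀ x, x ∈ U ↔ levelHomeo hT hcov hh σ x ∈ V := by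
    intro x
    obtain ⟨L, j, hx⟩ := exists_at hcov x
    have hy := levelMap_at hT hcov hh σ ⟨j, hx.2.1⟩ hx
    rw [hmem hU hx]
    refine (hσ L hx.1 ⟨j, hx.2.1⟩).trans ?_
    exact (hmem hV hy).symm
  ext y
  constructor
  · rintro ⟨x, hx, rfl⟩
    exact (hiff x).1 hx
  · intro hy
    refine ⟨(levelHomeo hT hcov hh σ).symm y, (hiff _).2 (by simpa using hy), by simp⟩

end saturated

/-! ### The Kakutani–Rokhlin partition of a minimal homeomorphism -/

section tower

open Topology

set_option linter.unusedSectionVars false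

variable {X : Type*} [TopologicalSpace X] {g : X ≃ₜ X} {B : Set X} {x : X} {m n : ℤ}

/-- The point `g ^ n x` of the orbit of `x`. -/
def orb (g : X ≃ₜ X) (n : ℤ) (x : X) : X := (g.toEquiv ^ n) x

lemma orb_zero : orb g 0 x = x := by simp [orb]

lemma orb_one : orb g 1 x = g x := by simp [orb]

lemma orb_orb : orb g m (orb g n x) = orb g (m + n) x := by
  simp [orb, zpow_add, Equiv.Perm.mul_apply]

lemma orb_apply : orb g m (g x) = orb g (m + 1) x := by rw [← orb_one, orb_orb]

lemma continuous_orb : Continuous (orb g n) :=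
  continuous_zpow g n

/-- Under a minimal homeomorphism of a compact space every point visits `B` both in the past and
in the strict future. -/
lemma exists_return [CompactSpace X] (hmin : IsMinimal g) (hB : IsOpen B) (hne : B.Nonempty) :
    (∀ x, ∃ j : ℕ, orb g (-j) x ∈ B) ∧ ∀ x, ∃ j : ℕ, orb g (j + 1) x ∈ B := by
  have hvisit : ∀ x, ∃ n : ℤ, orb g n x ∈ B := by
    intro x
    obtain ⟨_, ⟨n, rfl⟩, hy⟩ := (hmin x).exists_mem_open hB hne
    exact ⟨n, hy⟩
  obtain ⟨t, ht⟩ := isCompact_univ.elim_finite_subcover (fun n : ℤ => orb g n ⁻¹' B)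
    (fun n => hB.preimage continuous_orb) (fun x _ => Set.mem_iUnion.2 (hvisit x))
  have hbd : ∃ m : ℕ, ∀ x, ∃ n : ℤ, n.natAbs ≤ m ∧ orb g n x ∈ B := by
    refine ⟨t.sup Int.natAbs, fun x => ?_⟩
    obtain ⟨n, hn, hx⟩ := Set.mem_iUnion₂.1 (ht (Set.mem_univ x))
    exact ⟨n, Finset.le_sup (f := Int.natAbs) hn, hx⟩
  obtain ⟨m, hm⟩ := hbd
  refine ⟨fun x => ?_, fun x => ?_⟩
  · obtain ⟨n, hn, hx⟩ := hm (orb g (-m) x)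
    refine ⟨(m - n).toNat, ?_⟩
    rw [orb_orb] at hx
    convert hx using 2
    omega
  · obtain ⟨n, hn, hx⟩ := hm (orb g (m + 1) x)
    refine ⟨(m + n).toNat, ?_⟩
    rw [orb_orb] at hx
    convert hx using 2
    omega

lemma eventually_mem_iff (hB : IsClopen B) (n : ℤ) (x : X) :
    ∀ᶠ y in 𝓝 x, (orb g n y ∈ B ↔ orb g n x ∈ B) := by
  have h := hB.preimage (continuous_orb (g := g) (n := n))
  by_cases hx : orb g n x ∈ B
  · filter_upwards [h.2.mem_nhds hx] with y hy
    exact iff_of_true hy hx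
  · filter_upwards [h.compl.2.mem_nhds hx] with y hy
    exact iff_of_false hy hx

/-- A first visit time to a clopen set is locally constant. -/
lemma isLocallyConstant_find (hB : IsClopen B) (e : ℕ → ℤ) {t : X → ℕ}
    (h1 : ∀ x, orb g (e (t x)) x ∈ B) (h2 : ∀ x, ∀ j < t x, orb g (e j) x ∉ B) :
    IsLocallyConstant t := by
  rw [IsLocallyConstant.iff_eventually_eq]
  intro x
  have : ∀ᶠ y in 𝓝 x, ∀ j ∈ Finset.range (t x + 1), (orb g (e j) y ∈ B ↔ orb g (e j) x ∈ B) :=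
    (Filter.eventually_all_finset _).2 fun j _ => eventually_mem_iff hB _ x
  filter_upwards [this] with y hy
  have a1 := (hy (t x) (by simp)).2 (h1 x)
  rcases lt_trichotomy (t y) (t x) with h | h | h
  · exact absurd ((hy (t y) (by simp; omega)).1 (h1 y)) (h2 x _ h)
  · exact h
  · exact absurd a1 (h2 y _ h)

variable [CompactSpace X] [Nonempty X] [MeasurableSpace X] [BorelSpace X]
  {K : Set (ProbabilityMeasure X)}

/-- For a minimal `g` and a locally constant `c` there is a column structure all of whose
followers `h` satisfy `c ∘ h = c ∘ g`. The base is a fibre `B` of `c`; the columns group the points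
of `B` with the same `c`-name up to the first return to `B`. -/
lemma exists_tower (hg : PreservesAll K g) (hmin : IsMinimal g) {α : Type*} {c : X → α}
    (hc : IsLocallyConstant c) :
    ∃ T, PV K T ∧ (∀ x, cnt (atoms T) x = 1) ∧ ∀ x y, Link T x y → c y = c (g x) := by
  classical
  obtain ⟨x₀⟩ := ‹Nonempty X›
  set B : Set X := c ⁻¹' {c x₀} with hBdef
  have hB : IsClopen B := hc.isClopen_fiber _
  obtain ⟨hback, hforw⟩ := exists_return hmin hB.2 ⟨x₀, rfl⟩
  -- `t`: time since the last visit to `B`; `r`: time of the next visit to `B`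
  let t : X → ℕ := fun x => Nat.find (hback x)
  let r : X → ℕ := fun x => Nat.find (hforw x) + 1
  have ht1 : ∀ x, orb g (-(t x : ℤ)) x ∈ B := fun x => Nat.find_spec (hback x)
  have ht2 : ∀ x, ∀ j < t x, orb g (-(j : ℤ)) x ∉ B := fun x j hj => Nat.find_min (hback x) hj
  have hr1 : ∀ x, orb g (r x : ℤ) x ∈ B := fun x => by
    have := Nat.find_spec (hforw x)
    simpa [r] using this
  have hr2 : ∀ x, ∀ j : ℕ, 0 < j → j < r x → orb g (j : ℤ) x ∉ B := fun x j hj hjr => by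
    obtain ⟨j, rfl⟩ := Nat.exists_eq_add_of_lt hj
    have := Nat.find_min (hforw x) (m := j) (by simp only [r] at hjr; omega)
    simpa using this
  have hr0 : ∀ x, 0 < r x := fun x => Nat.succ_pos _
  have htc : IsLocallyConstant t := isLocallyConstant_find hB (fun j => -(j : ℤ)) ht1 ht2
  have hrc : IsLocallyConstant r := by
    have : IsLocallyConstant fun x => Nat.find (hforw x) :=
      isLocallyConstant_find hB (fun j => (j : ℤ) + 1)
        (fun x => Nat.find_spec (hforw x)) (fun x j hj => Nat.find_min (hforw x) hj)
    exact this.comp (· + 1)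
  -- the `c`-name of a point up to its next visit to `B`
  let ν : X → List α := fun b => (List.range (r b)).map fun j : ℕ => c (orb g (j : ℤ) b)
  have hνl : ∀ b, (ν b).length = r b := fun b => by simp [ν]
  have hνc : IsLocallyConstant ν := by
    rw [IsLocallyConstant.iff_eventually_eq]
    intro x
    have h1 : ∀ᶠ y in 𝓝 x, ∀ j ∈ Finset.range (r x), c (orb g (j : ℤ) y) = c (orb g (j : ℤ) x) :=
      (Filter.eventually_all_finset _).2 fun j _ =>
        (hc.comp_continuous continuous_orb).eventually_eq x
    filter_upwards [h1, hrc.eventually_eq x] with y hy hr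
    simp only [ν, hr]
    exact List.map_congr_left fun j hj => hy j (by simpa using hj)
  -- the last point of `B` visited, and the position of `x`
  let b : X → X := fun x => orb g (-(t x : ℤ)) x
  let κ : X → (_ : List α) × ℕ := fun x => ⟨ν (b x), t x⟩
  have hκc : IsLocallyConstant κ := by
    rw [IsLocallyConstant.iff_eventually_eq]
    intro x
    filter_upwards [htc.eventually_eq x, (hνc.comp_continuous
      (continuous_orb (g := g) (n := -(t x : ℤ)))).eventually_eq x] with y h1 h2
    simp only [κ, b, h1]
    simp only [Function.comp] at h2
    rw [h2]
  have hxb : ∀ x, orb g (t x : ℤ) (b x) = x := fun x => by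
    simp only [b]; rw [orb_orb, add_neg_cancel, orb_zero]
  have htr : ∀ x, t x < r (b x) := by
    intro x
    by_contra! h
    have h1 := hr1 (b x)
    simp only [b] at h1
    rw [orb_orb] at h1
    refine ht2 x (t x - r (b x)) (by have := hr0 (b x); omega) ?_
    convert h1 using 2
    push_cast [h]
    simp only [b]
    ring
  have hcx : ∀ x, (ν (b x))[t x]'(by rw [hνl]; exact htr x) = c x := by
    intro x
    simp [ν, hxb]
  have hgB : ∀ x, g x ∈ B ↔ t x + 1 = r (b x) := by
    intro x
    have e : orb g ((t x + 1 : ℕ) : ℤ) (b x) = g x := by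
      simp only [b]; rw [orb_orb, ← orb_one]; congr 1; push_cast; ring
    constructor
    · intro h
      by_contra hne
      refine hr2 (b x) (t x + 1) (by omega) (by have := htr x; omega) ?_
      rwa [e]
    · intro h
      rw [← e, h]
      exact hr1 _
  have hup : ∀ x, g x ∉ B → κ (g x) = ⟨ν (b x), t x + 1⟩ := by
    intro x hx
    have h1 : t (g x) = t x + 1 := by
      refine (Nat.find_eq_iff _).2 ⟨?_, ?_⟩
      · have := ht1 x
        rw [orb_apply]
        convert this using 2
        push_cast; ring
      · intro j hj
        rcases j with _ | j
        · simpa [orb_zero] using hx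
        · have := ht2 x j (by omega)
          rw [orb_apply]
          convert this using 3
          push_cast; ring
    have h2 : b (g x) = b x := by
      simp only [b, h1]
      rw [orb_apply]; congr 1; push_cast; ring
    simp only [κ, h1, h2]
  have ht0 : ∀ x, t x = 0 ↔ x ∈ B := by
    intro x
    constructor
    · intro h
      have := ht1 x
      rw [h] at this
      simpa [orb_zero] using this
    · intro h
      exact (Nat.find_eq_zero _).2 (by simpa [orb_zero] using h)
  have hlevel : ∀ y, y ∈ B → ∀ j < r y, κ (orb g (j : ℤ) y) = ⟨ν y, j⟩ := by
    intro y hy j hj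
    have h1 : t (orb g (j : ℤ) y) = j := by
      refine (Nat.find_eq_iff _).2 ⟨?_, ?_⟩
      · rw [orb_orb, neg_add_cancel, orb_zero]; exact hy
      · intro i hi
        have := hr2 y (j - i) (by omega) (by omega)
        rw [orb_orb]
        convert this using 3
        push_cast [hi.le]; ring
    have h2 : b (orb g (j : ℤ) y) = y := by
      simp only [b, h1]
      rw [orb_orb, neg_add_cancel, orb_zero]
    simp only [κ, h1, h2]
  -- one column for each name `w`; its level `j` is the set of points of position `j` in `w`
  have hfin : (Set.range fun x => ν (b x)).Finite := by
    have h1 := (hκc.comp Sigma.fst).range_finite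
    exact h1
  let W : Finset (List α) := hfin.toFinset
  let col : List α → List (Set X) := fun w =>
    (List.range w.length).map fun j => κ ⁻¹' {⟨w, j⟩}
  have hcoll : ∀ w, (col w).length = w.length := fun w => by simp [col]
  have hcolg : ∀ w j (h : j < (col w).length), (col w)[j] = κ ⁻¹' {⟨w, j⟩} := by
    intro w j h; simp [col]
  let T : Multiset (List (Set X)) := W.val.map col
  have hmemT : ∀ L, L ∈ T ↔ ∃ x, L = col (ν (b x)) := by
    intro L
    simp [T, W, eq_comm]
  have hpos : ∀ x, 0 < (ν (b x)).length := fun x => by rw [hνl]; exact hr0 _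
  have hat : ∀ x, At T (col (ν (b x))) (t x) x := by
    intro x
    refine ⟨(hmemT _).2 ⟨x, rfl⟩, by rw [hcoll, hνl]; exact htr x, ?_⟩
    rw [hcolg]
    exact rfl
  have hcnt : ∀ x, cnt (atoms T) x = 1 := by
    intro x
    have h1 : atoms T = (W.val.sigma fun w => Multiset.range w.length).map
        fun p => κ ⁻¹' {p} := by
      simp only [atoms, T, Multiset.bind_map, Multiset.sigma, Multiset.map_bind,
        Multiset.map_map]
      rfl
    have hnd : (W.val.sigma fun w => Multiset.range w.length).Nodup :=
      W.nodup.sigma fun w => Multiset.nodup_range _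
    have h2 : cnt (atoms T) x = (W.val.sigma fun w => Multiset.range w.length).count (κ x) := by
      rw [h1, cnt, Multiset.countP_map, ← Multiset.countP_eq_card_filter, Multiset.count]
      exact Multiset.countP_congr rfl fun p _ => rfl
    rw [h2, Multiset.count_eq_one_of_mem hnd]
    rw [Multiset.mem_sigma]
    exact ⟨by simp [W, κ], by simpa [κ, hνl] using htr x⟩
  have hpv : PV K T := by
    refine ⟨fun L hL => ?_, fun x => (hcnt x).le⟩
    obtain ⟨x, rfl⟩ := (hmemT L).1 hL
    have hstep : ∀ j, j + 1 < (ν (b x)).length →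
        g ⁻¹' (κ ⁻¹' {⟨ν (b x), j + 1⟩}) = κ ⁻¹' {⟨ν (b x), j⟩} := by
      intro j hj
      ext y
      simp only [Set.mem_preimage, Set.mem_singleton_iff]
      constructor
      · intro h
        have h1 : t (g y) = j + 1 := congrArg Sigma.snd h
        have h2 : g y ∉ B := fun hB => by rw [← ht0] at hB; omega
        rw [hup y h2] at h
        have h3 : ν (b y) = ν (b x) := congrArg Sigma.fst h
        have h4 : t y + 1 = j + 1 := congrArg Sigma.snd h
        simp only [κ, h3]
        congr 1
        omega
      · intro h
        have h3 : ν (b y) = ν (b x) := congrArg Sigma.fst h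
        have h4 : t y = j := congrArg Sigma.snd h
        rw [hup y, h3, h4]
        rw [hgB, ← hνl, h3, h4]
        omega
    have hmeas : ∀ μ ∈ K, ∀ j, j < (ν (b x)).length →
        μ (κ ⁻¹' {⟨ν (b x), j⟩}) = μ (κ ⁻¹' {⟨ν (b x), 0⟩}) := by
      intro μ hμ j
      induction j with
      | zero => intro _; rfl
      | succ j ih =>
        intro hj
        rw [← ih (by omega), ← hstep j hj]
        have h1 : (μ : Measure X).map g = μ := hg μ hμ
        have h2 := Measure.map_apply (μ := (μ : Measure X)) g.continuous.measurable
          (hκc.isClopen_fiber ⟨ν (b x), j + 1⟩).2.measurableSet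
        rw [h1] at h2
        exact congrArg ENNReal.toNNReal h2
    refine ⟨?_, ?_, ?_, ?_⟩
    · rw [← List.length_pos_iff, hcoll]; exact hpos x
    · intro D hD
      obtain ⟨j, hj, rfl⟩ := List.getElem_of_mem hD
      rw [hcolg]
      exact hκc.isClopen_fiber _
    · intro D hD
      obtain ⟨j, hj, rfl⟩ := List.getElem_of_mem hD
      rw [hcolg]
      exact ⟨_, hlevel (b x) (ht1 x) j (by rwa [hcoll, hνl] at hj)⟩
    · intro D hD D' hD' μ hμ
      obtain ⟨j, hj, rfl⟩ := List.getElem_of_mem hD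
      obtain ⟨j', hj', rfl⟩ := List.getElem_of_mem hD'
      rw [hcolg, hcolg, hmeas μ hμ j (by rwa [hcoll] at hj),
        hmeas μ hμ j' (by rwa [hcoll] at hj')]
  have hlink : ∀ x, Link T x (g x) := by
    intro x
    rw [link_iff hpv (hat x) (hat (g x))]
    by_cases h : g x ∈ B
    · right
      refine ⟨?_, (ht0 _).2 h⟩
      rw [hcoll, hνl, (hgB x).1 h]
      omega
    · left
      have h1 := hup x h
      have h2 : ν (b (g x)) = ν (b x) := congrArg Sigma.fst h1
      have h3 : t (g x) = t x + 1 := congrArg Sigma.snd h1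
      exact ⟨by rw [h2], h3.symm⟩
  refine ⟨T, hpv, hcnt, fun x y hxy => ?_⟩
  have hconst : ∀ y z, κ y = κ z → c y = c z := by
    intro y z h
    have h2 : ν (b y) = ν (b z) := congrArg Sigma.fst h
    have h3 : t y = t z := congrArg Sigma.snd h
    rw [← hcx y, ← hcx z]
    simp only [h2, h3]
  have hcompat : Compat T (c ⁻¹' {c (g x)}) := by
    intro D hD
    obtain ⟨L, hL, hDL⟩ := mem_atoms.1 hD
    obtain ⟨z, rfl⟩ := (hmemT L).1 hL
    obtain ⟨j, hj, rfl⟩ := List.getElem_of_mem hDL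
    rw [hcolg]
    rw [or_iff_not_imp_right]
    intro hnd
    obtain ⟨y, hy, hyc⟩ := Set.not_disjoint_iff.1 hnd
    intro y' hy'
    have h : κ y' = κ y := hy'.trans hy.symm
    exact (hconst _ _ h).trans hyc
  have hbase : ∀ L ∈ T, ∀ y ∈ base L, c y = c x₀ := by
    intro L hL y hy
    have h1 := (at_base hpv hL hy).unique hpv (hat y)
    exact (ht0 y).1 h1.2.symm
  refine (hcompat.image_mem_iff ?_ hpv hcnt hxy (hlink x)).2 rfl
  by_cases h : c x₀ = c (g x)
  · exact .inl fun L hL y hy => (hbase L hL y hy).trans h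
  · refine .inr fun L hL => Set.disjoint_left.2 fun y hy hy' => h ?_
    exact (hbase L hL y hy).symm.trans hy'

end tower

/-! ### Approximation of minimal homeomorphisms -/

section final

variable {X : Type*} [TopologicalSpace X] [CompactSpace X]
    [TopologicalSpace.MetrizableSpace X] [TotallyDisconnectedSpace X] [Nonempty X]
    [MeasurableSpace X] [BorelSpace X] {K : Set (ProbabilityMeasure X)}

/-- Any minimal `g` preserving `K` agrees, up to any locally constant function, with a `K`-saturated
homeomorphism preserving `K`. -/
lemma exists_saturated (hK : DynamicalSimplex K) {g : X ≃ₜ X} (hg : PreservesAll K g)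
    (hmin : IsMinimal g) {α : Type*} {c : X → α} (hc : IsLocallyConstant c) :
    ∃ h : X ≃ₜ X, PreservesAll K h ∧ KSaturated K h ∧ ∀ x, c (h x) = c (g x) := by
  obtain ⟨T, hT, hcov, hlink⟩ := exists_tower hg hmin hc
  obtain ⟨Q, hQ0, hR, hpv, hQcov, hQ⟩ := exists_sequence hK hT hcov
  have hfine : ∀ A, IsClopen A → ∃ n, Fine (Q n) A := fun A hA => by
    obtain ⟨n, hn, -⟩ := hQ A A hA hA
    exact ⟨n, hn⟩
  obtain ⟨h, hh⟩ := exists_limit hR hpv hQcov hfine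
  refine ⟨h, preservesAll_limit hpv hQcov hfine hh, ?_, fun x => hlink x _ (hQ0 ▸ hh 0 x)⟩
  intro U V hU hV hUV
  obtain ⟨n, hnU, hnV, hw⟩ := hQ U V hU hV
  exact exists_of_balanced (hpv n) (hQcov n) (hh n) hnU.compat hnV.compat (hw hUV)

/-- A totally disconnected compact metric space has a locally constant function with fibres of
small diameter: send a point to the set of members of a fine clopen cover which contain it. -/
lemma exists_small_fibres {Y : Type*} [MetricSpace Y] [CompactSpace Y]
    [TotallyDisconnectedSpace Y] {ε : ℝ} (hε : 0 < ε) :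
    ∃ c : Y → Set (Set Y), IsLocallyConstant c ∧ ∀ x y, c x = c y → dist x y < ε := by
  have h1 : ∀ x : Y, ∃ A : Set Y, IsClopen A ∧ x ∈ A ∧ A ⊆ Metric.ball x (ε / 2) := fun x =>
    compact_exists_isClopen_in_isOpen Metric.isOpen_ball (Metric.mem_ball_self (by positivity))
  choose A hA hxA hAb using h1
  obtain ⟨t, ht⟩ := isCompact_univ.elim_finite_subcover A (fun x => (hA x).2)
    (fun x _ => Set.mem_iUnion.2 ⟨x, hxA x⟩)
  refine ⟨fun y => {D | ∃ z ∈ t, D = A z ∧ y ∈ D}, ?_, fun x y hxy => ?_⟩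
  · rw [IsLocallyConstant.iff_eventually_eq]
    intro x
    have : ∀ᶠ y in nhds x, ∀ z ∈ t, (y ∈ A z ↔ x ∈ A z) := by
      refine (Filter.eventually_all_finset _).2 fun z _ => ?_
      by_cases hx : x ∈ A z
      · filter_upwards [(hA z).2.mem_nhds hx] with y hy
        exact iff_of_true hy hx
      · filter_upwards [(hA z).compl.2.mem_nhds hx] with y hy
        exact iff_of_false hy hx
    filter_upwards [this] with y hy
    ext D
    constructor
    · rintro ⟨z, hz, rfl, h⟩
      exact ⟨z, hz, rfl, (hy z hz).1 h⟩
    · rintro ⟨z, hz, rfl, h⟩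
      exact ⟨z, hz, rfl, (hy z hz).2 h⟩
  · obtain ⟨z, hz, hxz⟩ := Set.mem_iUnion₂.1 (ht (Set.mem_univ x))
    have h2 : A z ∈ {D | ∃ z ∈ t, D = A z ∧ x ∈ D} := ⟨z, hz, rfl, hxz⟩
    change {D | ∃ z ∈ t, D = A z ∧ x ∈ D} = {D | ∃ z ∈ t, D = A z ∧ y ∈ D} at hxy
    rw [hxy] at h2
    obtain ⟨-, -, -, hyz⟩ := h2
    have h3 := Metric.mem_ball.1 (hAb z hxz)
    have h4 := Metric.mem_ball.1 (hAb z hyz)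
    have h5 := dist_triangle_right x y z
    linarith

end final

end DynSimplex.Proof

theorem minimal_mem_closure_saturated
    {X : Type*} [TopologicalSpace X] [CompactSpace X]
    [TopologicalSpace.MetrizableSpace X] [TotallyDisconnectedSpace X] [PerfectSpace X]
    [Nonempty X] [MeasurableSpace X] [BorelSpace X]
    (K : Set (MeasureTheory.ProbabilityMeasure X)) (hK : DynSimplex.DynamicalSimplex K)
    (g : X ≃ₜ X) (hg : DynSimplex.PreservesAll K g) (hmin : DynSimplex.IsMinimal g) :
    g ∈ closure {h : X ≃ₜ X |
      DynSimplex.PreservesAll K h ∧ DynSimplex.KSaturated K h} := by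
  let := TopologicalSpace.metrizableSpaceMetric X
  rw [closure_induced, Metric.mem_closure_iff]
  intro ε hε
  obtain ⟨c, hc, hcε⟩ := DynSimplex.Proof.exists_small_fibres (Y := X) hε
  obtain ⟨h, h1, h2, h3⟩ := DynSimplex.Proof.exists_saturated hK hg hmin hc
  refine ⟨(h : C(X, X)), ⟨h, ⟨h1, h2⟩, rfl⟩, ?_⟩
  rw [ContinuousMap.dist_lt_iff hε]
  exact fun x => hcε _ _ (h3 x).symm
end
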